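/- The Kac polynomial of the cyclic quiver Q^K with K+1 vertices satisfies: a_{Q^K, d}(q) = q + K when d \in \mathbb{Z}_{>0} \cdot \delta (a positive imaginary root), and a_{Q^K, d}(q) = 1 when d is a positive real root of \widehat{\mathfrak{sl}}_{K+1}; in particular the number of dimension vectors d with |d| = N supporting absolutely indecomposable representations, weighted by a_{Q^K,d}(1), is: (K+1) + K for each multiple of \delta plus 1 for each real root. -/

import Mathlib

open Matrix

/-- A representation of the cyclic quiver `Q^K` (vertices `ℤ/(K+1)`, arrows
`i → i+1`) of dimension vector `d` over `F`, in matrix form. -/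
def CRep (K : ℕ) (F : Type) (d : Fin (K + 1) → ℕ) : Type :=
  ∀ i : Fin (K + 1), Matrix (Fin (d (i + 1))) (Fin (d i)) F

/-- Isomorphism of representations. -/
def CIso (K : ℕ) (F : Type) [Field F] (d : Fin (K + 1) → ℕ)
    (r r' : CRep K F d) : Prop :=
  ∃ g : ∀ i : Fin (K + 1), Matrix (Fin (d i)) (Fin (d i)) F,
    (∀ i, IsUnit (g i)) ∧ ∀ i, g (i + 1) * r i = r' i * g i

/-- Direct sum of representations. -/
def cdsum (K : ℕ) (F : Type) [Field F] {d₁ d₂ : Fin (K + 1) → ℕ}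
    (r₁ : CRep K F d₁) (r₂ : CRep K F d₂) : CRep K F (d₁ + d₂) :=
  fun i => Matrix.reindex finSumFinEquiv finSumFinEquiv
    (Matrix.fromBlocks (r₁ i) 0 0 (r₂ i))

/-- A representation is decomposable if it is isomorphic to a direct sum of two
nonzero representations. -/
def CDecomp (K : ℕ) (F : Type) [Field F] (d : Fin (K + 1) → ℕ)
    (r : CRep K F d) : Prop :=
  ∃ d₁ d₂ : Fin (K + 1) → ℕ, d₁ ≠ 0 ∧ d₂ ≠ 0 ∧
    ∃ (h : d = d₁ + d₂) (r₁ : CRep K F d₁) (r₂ : CRep K F d₂),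
      CIso K F (d₁ + d₂) (h ▸ r) (cdsum K F r₁ r₂)

/-- Indecomposability. -/
def CIndec (K : ℕ) (F : Type) [Field F] (d : Fin (K + 1) → ℕ)
    (r : CRep K F d) : Prop :=
  d ≠ 0 ∧ ¬ CDecomp K F d r

/-- Base change of a representation along a field homomorphism. -/
def mapCRep (K : ℕ) {F F' : Type} (d : Fin (K + 1) → ℕ)
    (φ : F → F') (r : CRep K F d) : CRep K F' d :=
  fun i => (r i).map φ

/-- Absolute indecomposability: the representation stays indecomposable over every
field extension (equivalently, over the algebraic closure). -/
def CAbsIndec (K : ℕ) (F : Type) [Field F] (d : Fin (K + 1) → ℕ)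
    (r : CRep K F d) : Prop :=
  ∀ (F' : Type) [Field F'] (φ : F →+* F'), CIndec K F' d (mapCRep K d φ r)

/-- The number of isomorphism classes of absolutely indecomposable representations of
the cyclic quiver of dimension `d` over `F`; for `F = 𝔽_q` this is the value
`a_{Q^K, d}(q)` of the Kac polynomial. -/
noncomputable def kacCount (K : ℕ) (F : Type) [Field F]
    (d : Fin (K + 1) → ℕ) : ℕ :=
  Nat.card (Quot (fun r r' : { r : CRep K F d // CAbsIndec K F d r } =>
    CIso K F d r.1 r'.1))

/-- The Tits form of the cyclic quiver: `d ≠ 0` is a positive real root of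
`ŝl_{K+1}` iff `qform K d = 1`, and a positive imaginary root iff `qform K d = 0`,
i.e. `d ∈ ℤ_{>0}·δ`. -/
def qform (K : ℕ) (d : Fin (K + 1) → ℕ) : ℤ :=
  (∑ i, (d i : ℤ) ^ 2) - ∑ i : Fin (K + 1), (d i : ℤ) * (d (i + 1) : ℤ)

/-!
A representation of dimension vector `d` is a degree-one operator `N` on the total space
`⨁ i, F ^ d i`, graded by the vertices, and it is indecomposable iff no nontrivial idempotent
commutes with `N` and with the projectors onto the vertices. By Fitting's lemma `N` is then
nilpotent or invertible.

If `N` is nilpotent with `N ^ m ≠ 0 = N ^ (m + 1)`, a homogeneous vector `v` with `N ^ m v ≠ 0`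
generates a string `v, N v, …, N ^ m v` that splits off; hence the representation is this string,
which is determined by its length and the vertex of `v`. If `N` is invertible, then `d = l • δ` and
the representation amounts to an invertible matrix up to conjugacy. Absolute indecomposability
forces a single eigenvalue over the algebraic closure, which by Galois descent lies in `F`, so the
matrix is a Jordan block with eigenvalue in `Fˣ`.

Thus `l • δ` carries the `q - 1` Jordan blocks and one string of length `(K + 1) * l` for each of
the `K + 1` starting vertices. If the Tits form of `d` is `1`, the differences `d (j + 1) - d j`
are integers with sum `0` and sum of squares `2`: one of them is `1`, one is `-1` and the others
vanish, so `d` is the dimension vector of exactly one string.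
-/

/-- A set `S` in a ring is *indecomposable* if the only idempotents commuting with all of its
elements are `0` and `1`. For operators on a module this says that the module has no nontrivial
direct sum decomposition stable under `S`. -/
def IsIndecomposable {R : Type*} [Ring R] (S : Set R) : Prop :=
  ∀ e : R, IsIdempotentElem e → (∀ s ∈ S, Commute e s) → e = 0 ∨ e = 1

namespace IsIndecomposable

variable {F R : Type*} [Field F] [Ring R] [Algebra F R]

theorem map_ringEquiv {R' : Type*} [Ring R'] (f : R ≃+* R') {S : Set R}
    (hS : IsIndecomposable S) : IsIndecomposable (f '' S) := by
  intro e he hcomm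
  have h := hS (f.symm e) (he.map f.symm) fun s hs => by
    simpa using (hcomm (f s) ⟨s, hs, rfl⟩).map f.symm
  simpa using h

open Polynomial in
-- An annihilating polynomial of `x` is `X ^ k * q` with `X` and `q` coprime; the Bézout relation
-- evaluated at `x` exhibits the projector onto the nilpotent part of `x`.
theorem isNilpotent_or_isUnit {S : Set R} (hS : IsIndecomposable S) {x : R}
    (hx : IsIntegral F x) (hxS : ∀ s ∈ S, Commute x s) : IsNilpotent x ∨ IsUnit x := by
  obtain ⟨p, hp, hpx⟩ := hx
  obtain ⟨q, hpq, hq⟩ := exists_eq_pow_rootMultiplicity_mul_and_not_dvd p hp.ne_zero 0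
  set k := rootMultiplicity 0 p
  rw [C_0, sub_zero] at hpq hq
  obtain ⟨u, w, huw⟩ : IsCoprime (X ^ (k + 1)) q :=
    ((irreducible_X.coprime_iff_not_dvd).2 hq).pow_left
  have hbezout : aeval x u * x ^ (k + 1) + aeval x (w * q) = 1 := by
    simpa using congrArg (aeval x) huw
  have hkill : x ^ (k + 1) * aeval x (w * q) = 0 := calc
    x ^ (k + 1) * aeval x (w * q) = aeval x (X ^ (k + 1) * (w * q)) := by simp
    _ = aeval x (X * w * p) := by rw [hpq]; ring_nf
    _ = 0 := by rw [map_mul, aeval_def x p, hpx, mul_zero]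
  have hidem : IsIdempotentElem (aeval x (w * q)) := calc
    aeval x (w * q) * aeval x (w * q)
    _ = (aeval x u * x ^ (k + 1) + aeval x (w * q)) * aeval x (w * q) := by
      rw [add_mul, mul_assoc, hkill, mul_zero, zero_add]
    _ = aeval x (w * q) := by rw [hbezout, one_mul]
  have hcomm : ∀ s ∈ S, Commute (aeval x (w * q)) s := fun s hs =>
    (Algebra.commute_of_mem_adjoin_singleton_of_commute
      (aeval_mem_adjoin_singleton F x) (hxS s hs).symm).symm
  rcases hS _ hidem hcomm with h | h
  · rw [h, add_zero] at hbezout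
    have hpow : Commute (x ^ (k + 1)) (aeval x u) :=
      (Algebra.commute_of_mem_adjoin_self (aeval_mem_adjoin_singleton F x)).pow_left _
    exact .inr (isUnit_pow_succ_iff.1
      (isUnit_iff_exists.2 ⟨aeval x u, hpow.eq.trans hbezout, hbezout⟩))
  · exact .inl ⟨k + 1, by rw [← mul_one (x ^ _), ← h, hkill]⟩

theorem exists_isNilpotent_algebraMap_sub [IsAlgClosed F] [FiniteDimensional F R] [Nontrivial R]
    {x : R} (hx : IsIndecomposable {x}) : ∃ μ : F, IsNilpotent (algebraMap F R μ - x) := by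
  obtain ⟨μ, hμ⟩ := spectrum.nonempty_of_isAlgClosed_of_finiteDimensional F x
  have hcomm : Commute (algebraMap F R μ - x) x :=
    .sub_left (Algebra.commutes μ x) (.refl x)
  exact ⟨μ, (hx.isNilpotent_or_isUnit (Algebra.IsIntegral.isIntegral (R := F) _)
    (by simpa using hcomm)).resolve_right hμ⟩

end IsIndecomposable

section GaloisDescent

variable {n : Type*} [Fintype n] [DecidableEq n]

theorem mapMatrix_algebraMap_sub {R S : Type*} [CommRing R] [CommRing S] (f : R →+* S) (c : R)
    (A : Matrix n n R) :
    f.mapMatrix (algebraMap R (Matrix n n R) c - A) =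
      algebraMap S (Matrix n n S) (f c) - A.map f := by
  ext i j
  simp [algebraMap_matrix_apply, apply_ite f]

variable {F E : Type*} [Field F] [Field E] [Algebra F E]

-- Conjugating by `σ` fixes the matrix, so `σ μ` is an eigenvalue too, but there is only one.
theorem mem_range_algebraMap_of_isNilpotent_algebraMap_sub [IsGalois F E] [Nonempty n]
    {A : Matrix n n F} {μ : E}
    (hμ : IsNilpotent (algebraMap E (Matrix n n E) μ - A.map (algebraMap F E))) :
    μ ∈ Set.range (algebraMap F E) := by
  refine (InfiniteGalois.mem_range_algebraMap_iff_fixed μ).2 fun σ => ?_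
  have hσ : IsNilpotent (algebraMap E (Matrix n n E) (σ μ) - A.map (algebraMap F E)) := by
    have := hμ.map (σ : E →+* E).mapMatrix
    rw [mapMatrix_algebraMap_sub, Matrix.map_map] at this
    simpa [Function.comp_def] using this
  have hdiff : IsNilpotent (algebraMap E (Matrix n n E) (σ μ - μ)) := by
    have hcomm : Commute (algebraMap E (Matrix n n E) (σ μ) - A.map (algebraMap F E))
        (algebraMap E (Matrix n n E) μ - A.map (algebraMap F E)) := by
      refine .sub_left (Algebra.commutes _ _) (.sub_right ?_ (.refl _))
      exact (Algebra.commutes μ _).symm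
    simpa [map_sub] using hcomm.isNilpotent_sub hσ hμ
  rw [IsNilpotent.map_iff (algebraMap E (Matrix n n E)).injective] at hdiff
  exact sub_eq_zero.1 hdiff.eq_zero

theorem exists_isNilpotent_algebraMap_sub_of_isIndecomposable_map [PerfectField F] [Nonempty n]
    {A : Matrix n n F}
    (hA : IsIndecomposable {A.map (algebraMap F (AlgebraicClosure F))}) :
    ∃ c : F, IsNilpotent (algebraMap F (Matrix n n F) c - A) := by
  obtain ⟨μ, hμ⟩ := hA.exists_isNilpotent_algebraMap_sub (F := AlgebraicClosure F)
  obtain ⟨c, rfl⟩ := mem_range_algebraMap_of_isNilpotent_algebraMap_sub hμ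
  let f := (algebraMap F (AlgebraicClosure F)).mapMatrix (m := n)
  have hf : Function.Injective f := map_injective (algebraMap F (AlgebraicClosure F)).injective
  refine ⟨c, (IsNilpotent.map_iff hf).1 ?_⟩
  rwa [mapMatrix_algebraMap_sub]

end GaloisDescent

section ChainBasis

variable {R M : Type*} [CommRing R] [AddCommGroup M] [Module R M] {n : ℕ}
  {N N' : Module.End R M} {b b' : Module.Basis (Fin n) R M}

/-- The basis `b 0, …, b (n - 1)` is a *chain basis* (Jordan basis of a single nilpotent block)
for `N` if `N` maps each basis vector to the next one and kills the last one. -/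
def IsChainBasis (N : Module.End R M) (b : Module.Basis (Fin n) R M) : Prop :=
  ∀ t : Fin n, N (b t) = if h : (t : ℕ) + 1 < n then b ⟨t + 1, h⟩ else 0

namespace IsChainBasis

theorem pow_apply (hb : IsChainBasis N b) (s : ℕ) (t : Fin n) :
    (N ^ s) (b t) = if h : (t : ℕ) + s < n then b ⟨t + s, h⟩ else 0 := by
  induction s with
  | zero => simp
  | succ s ih =>
    rw [pow_succ', Module.End.mul_apply, ih]
    split_ifs with h h' h'
    · rw [hb, dif_pos (by exact h')]; rfl
    · rw [hb, dif_neg (by exact h')]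
    · omega
    · rw [map_zero]

theorem pow_card_eq_zero (hb : IsChainBasis N b) : N ^ n = 0 :=
  b.ext fun t => by simp [hb.pow_apply]

theorem isNilpotent (hb : IsChainBasis N b) : IsNilpotent N :=
  ⟨n, hb.pow_card_eq_zero⟩

-- An operator commuting with `N` is determined by its value `∑ c s • b s` on the generator `b 0`,
-- hence equals `∑ c s • N ^ s`.
theorem exists_eq_sum_smul_pow (hb : IsChainBasis N b) {G : Module.End R M} (hG : Commute G N) :
    ∃ c : Fin n → R, G = ∑ s, c s • N ^ (s : ℕ) := by
  rcases n with - | m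
  · exact ⟨0, b.ext fun t => t.elim0⟩
  have hgen (t : Fin (m + 1)) : (N ^ (t : ℕ)) (b 0) = b t := by
    simp [hb.pow_apply, -Order.lt_add_one_iff, t.isLt]
  refine ⟨b.repr (G (b 0)), b.ext fun t => ?_⟩
  calc G (b t) = (N ^ (t : ℕ)) (G (b 0)) := by
        rw [← hgen t, ← Module.End.mul_apply, (hG.pow_right t).eq, Module.End.mul_apply]
    _ = (N ^ (t : ℕ)) (∑ s, b.repr (G (b 0)) s • (N ^ (s : ℕ)) (b 0)) := by
        simp only [hgen, b.sum_repr]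
    _ = (∑ s, b.repr (G (b 0)) s • N ^ (s : ℕ)) (b t) := by
        simp only [map_sum, map_smul, LinearMap.sum_apply, LinearMap.smul_apply, ← hgen t,
          ← Module.End.mul_apply, ← pow_add, add_comm]

theorem exists_isUnit_semiconjBy (hb : IsChainBasis N b) (hb' : IsChainBasis N' b') :
    ∃ G : Module.End R M, IsUnit G ∧ SemiconjBy G N N' ∧ ∀ t, G (b t) = b' t := by
  let G := b.equiv b' (Equiv.refl _)
  have hG (t : Fin n) : G (b t) = b' t := by simp [G]
  refine ⟨G, (Module.End.isUnit_iff _).2 G.bijective, b.ext fun t => ?_, hG⟩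
  simp only [Module.End.mul_apply, LinearEquiv.coe_coe, hG, hb t, hb' t]
  split_ifs
  · exact hG _
  · exact map_zero G

theorem isIndecomposable {F : Type*} [Field F] [Module F M] {N : Module.End F M}
    {b : Module.Basis (Fin n) F M} (hb : IsChainBasis N b) : IsIndecomposable {N} := by
  intro e he hcomm
  obtain ⟨c, hc⟩ := hb.exists_eq_sum_smul_pow (hcomm N rfl)
  rcases n with - | m
  · exact .inl (b.ext fun t => t.elim0)
  rw [Fin.sum_univ_succ, Fin.val_zero, pow_zero] at hc
  have hnil : IsNilpotent (∑ s : Fin m, c s.succ • N ^ (s.succ : ℕ)) :=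
    Commute.isNilpotent_sum (fun s _ => (hb.isNilpotent.pow_of_pos (by simp)).smul _)
      fun s t _ _ => (((Commute.refl N).pow_pow _ _).smul_left _).smul_right _
  rcases eq_or_ne (c 0) 0 with h0 | h0
  · rw [h0, zero_smul, zero_add] at hc
    exact .inl (he.eq_zero_of_isNilpotent (hc ▸ hnil))
  · have hunit : IsUnit e := hc ▸ hnil.isUnit_add_left_of_commute
      ((isUnit_one.smul (Units.mk0 _ h0))) ((Commute.one_right _).smul_right _)
    exact .inr ((IsIdempotentElem.iff_eq_one_of_isUnit hunit).1 he)

end IsChainBasis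

end ChainBasis

section Graded

theorem proj_apply_eq_ite {ι R M : Type*} [DecidableEq ι] [CommRing R] [AddCommGroup M] [Module R M]
    {P : ι → Module.End R M} {i : ι} (hP : OrthogonalIdempotents P) {x : M} (hx : P i x = x)
    (j : ι) : P j x = if j = i then x else 0 := by
  split_ifs with h
  · rw [h, hx]
  · rw [← hx, ← Module.End.mul_apply, hP.ortho h, LinearMap.zero_apply]

theorem semiconjBy_pow_nsmul {ι A : Type*} [AddMonoid ι] [Monoid A] {P : ι → A} {N : A} {a : ι}
    (hN : ∀ i, SemiconjBy N (P i) (P (i + a))) (s : ℕ) (i : ι) :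
    SemiconjBy (N ^ s) (P i) (P (i + s • a)) := by
  induction s with
  | zero => simp
  | succ s ih =>
    rw [pow_succ', succ_nsmul, ← add_assoc]
    exact (hN _).mul_left ih

variable {ι R M : Type*} [AddMonoid ι] [CommRing R] [AddCommGroup M] [Module R M] {n : ℕ}
  {P : ι → Module.End R M} {a i i' : ι} {N N' : Module.End R M} {b b' : Module.Basis (Fin n) R M}

/-- For a module graded by projectors `P`, a chain basis for an operator `N` of degree `a` is a
*graded chain basis* starting at `i` if `b t` is homogeneous of degree `i + t • a`. -/
structure IsGradedChainBasis (P : ι → Module.End R M) (a : ι) (N : Module.End R M) (i : ι)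
    (b : Module.Basis (Fin n) R M) : Prop where
  isChainBasis : IsChainBasis N b
  proj_apply_self (t : Fin n) : P (i + (t : ℕ) • a) (b t) = b t

namespace IsGradedChainBasis

theorem exists_isUnit_semiconjBy (hP : OrthogonalIdempotents P)
    (hb : IsGradedChainBasis P a N i b) (hb' : IsGradedChainBasis P a N' i b') :
    ∃ G : Module.End R M, IsUnit G ∧ (∀ j, Commute G (P j)) ∧ SemiconjBy G N N' := by
  classical
  obtain ⟨G, hunit, hG, hGb⟩ := hb.isChainBasis.exists_isUnit_semiconjBy hb'.isChainBasis
  refine ⟨G, hunit, fun j => b.ext fun t => ?_, hG⟩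
  simp only [Module.End.mul_apply, hGb, proj_apply_eq_ite hP (hb.proj_apply_self t),
    proj_apply_eq_ite hP (hb'.proj_apply_self t)]
  split_ifs
  · exact hGb t
  · exact map_zero G

theorem pow_pred_mul_proj_ne_zero_iff [Nontrivial R] (hP : OrthogonalIdempotents P)
    (hb : IsGradedChainBasis P a N i b) (hn : 0 < n) {j : ι} :
    N ^ (n - 1) * P j ≠ 0 ↔ j = i := by
  classical
  constructor
  · contrapose!
    refine fun hj => b.ext fun t => ?_
    rw [Module.End.mul_apply, proj_apply_eq_ite hP (hb.proj_apply_self t)]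
    split_ifs with h
    · have : (t : ℕ) ≠ 0 := by
        intro h0
        exact hj (by simpa [h0] using h)
      rw [hb.isChainBasis.pow_apply, dif_neg (by omega), LinearMap.zero_apply]
    · simp
  · rintro rfl h
    have h0 : P j (b ⟨0, hn⟩) = b ⟨0, hn⟩ := by simpa using hb.proj_apply_self ⟨0, hn⟩
    have := congrArg (· (b ⟨0, hn⟩)) h
    simp [h0, hb.isChainBasis.pow_apply, hn, b.ne_zero] at this

theorem start_eq_of_semiconjBy [Nontrivial R] (hP : OrthogonalIdempotents P) (hn : 0 < n)
    (hb : IsGradedChainBasis P a N i b) (hb' : IsGradedChainBasis P a N' i' b')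
    {G : Module.End R M} (hunit : IsUnit G) (hGP : ∀ j, Commute G (P j))
    (hG : SemiconjBy G N N') : i = i' := by
  rw [← hb'.pow_pred_mul_proj_ne_zero_iff hP hn]
  intro h
  have hsemi : G * (N ^ (n - 1) * P i) = N' ^ (n - 1) * P i * G :=
    (hG.pow_right _).mul_right (hGP i)
  rw [h, zero_mul, hunit.mul_right_eq_zero] at hsemi
  exact (hb.pow_pred_mul_proj_ne_zero_iff hP hn).2 rfl hsemi

end IsGradedChainBasis

end Graded

section ChainProjector

section Field

variable {F M : Type*} [Field F] [AddCommGroup M] [Module F M] {N : Module.End F M} {v : M} {m : ℕ}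

theorem linearIndependent_pow_apply (hv : (N ^ m) v ≠ 0) (hv' : (N ^ (m + 1)) v = 0) :
    LinearIndependent F fun t : Fin (m + 1) => (N ^ (t : ℕ)) v := by
  refine Fintype.linearIndependent_iff.2 fun c hc t => ?_
  induction t using WellFoundedLT.induction with
  | ind t ih =>
    have hsum : ∑ s : Fin (m + 1), c s • (N ^ (m - t + s)) v = 0 := by
      simpa only [map_sum, map_smul, ← Module.End.mul_apply, ← pow_add, map_zero]
        using congrArg (N ^ (m - (t : ℕ))) hc
    rw [Finset.sum_eq_single_of_mem t (Finset.mem_univ t), Nat.sub_add_cancel t.is_le] at hsum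
    · exact (smul_eq_zero.1 hsum).resolve_right hv
    · intro s _ hst
      rcases lt_or_gt_of_ne hst with hlt | hgt
      · rw [ih s hlt, zero_smul]
      · rw [Module.End.pow_map_zero_of_le (by omega) hv', smul_zero]

theorem exists_dual_pow_apply_eq_ite (hv : (N ^ m) v ≠ 0) (hv' : (N ^ (m + 1)) v = 0) :
    ∃ φ : Module.Dual F M, ∀ k, φ ((N ^ k) v) = if k = m then 1 else 0 := by
  have hli := linearIndependent_pow_apply hv hv'
  obtain ⟨φ, hφ⟩ := (Finsupp.lapply (Fin.last m) ∘ₗ hli.repr).exists_extend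
  refine ⟨φ, fun k => ?_⟩
  rcases lt_or_ge m k with hk | hk
  · rw [Module.End.pow_map_zero_of_le hk hv', map_zero, if_neg hk.ne']
  · let t : Fin (m + 1) := ⟨k, Nat.lt_succ_of_le hk⟩
    have := LinearMap.congr_fun hφ ⟨_, Submodule.subset_span (Set.mem_range_self t)⟩
    rw [LinearMap.comp_apply, LinearMap.comp_apply, hli.repr_eq_single t _ rfl] at this
    simpa [Finsupp.single_apply, t, Fin.ext_iff] using this

end Field

variable {R M : Type*} [CommRing R] [AddCommGroup M] [Module R M] {N : Module.End R M} {v : M}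
  {m : ℕ}

/-- For a functional `φ` with `φ (N ^ m v) = 1` that vanishes on the other `N ^ k v`, the projector
of `M` onto the span of `v, N v, …, N ^ m v` whose coordinates are read off by the functionals
`φ ∘ N ^ (m - t)`; it commutes with `N` when `N ^ (m + 1) = 0`. -/
def chainProjector (N : Module.End R M) (v : M) (m : ℕ) (φ : Module.Dual R M) : Module.End R M :=
  ∑ t ∈ Finset.range (m + 1), (φ ∘ₗ N ^ (m - t)).smulRight ((N ^ t) v)

theorem chainProjector_apply (φ : Module.Dual R M) (x : M) :
    chainProjector N v m φ x =
      ∑ t ∈ Finset.range (m + 1), φ ((N ^ (m - t)) x) • (N ^ t) v := by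
  simp [chainProjector]

theorem commute_chainProjector (φ : Module.Dual R M) (hN : N ^ (m + 1) = 0) :
    Commute (chainProjector N v m φ) N := by
  refine LinearMap.ext fun x => ?_
  rw [Module.End.mul_apply, Module.End.mul_apply, chainProjector_apply, chainProjector_apply,
    Finset.sum_range_succ', Finset.sum_range_succ, map_add, map_sum]
  simp only [map_smul, ← Module.End.mul_apply, ← pow_succ, ← pow_succ', Nat.sub_zero, hN,
    LinearMap.zero_apply, map_zero, zero_smul, smul_zero, add_zero]
  refine Finset.sum_congr rfl fun t ht => ?_
  rw [show m - (t + 1) + 1 = m - t by have := Finset.mem_range.1 ht; omega]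

theorem chainProjector_apply_pow_apply {φ : Module.Dual R M}
    (hφ : ∀ k, φ ((N ^ k) v) = if k = m then 1 else 0) {s : ℕ} (hs : s ∈ Finset.range (m + 1)) :
    chainProjector N v m φ ((N ^ s) v) = (N ^ s) v := by
  rw [chainProjector_apply, Finset.sum_eq_single_of_mem s hs]
  · rw [← Module.End.mul_apply, ← pow_add, hφ, if_pos (by grind), one_smul]
  · intro t ht hts
    rw [← Module.End.mul_apply, ← pow_add, hφ, if_neg (by grind), zero_smul]

theorem isIdempotentElem_chainProjector {φ : Module.Dual R M}
    (hφ : ∀ k, φ ((N ^ k) v) = if k = m then 1 else 0) :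
    IsIdempotentElem (chainProjector N v m φ) := by
  refine LinearMap.ext fun x => ?_
  rw [Module.End.mul_apply, chainProjector_apply _ x, map_sum]
  refine Finset.sum_congr rfl fun s hs => ?_
  rw [map_smul, chainProjector_apply_pow_apply hφ hs]

theorem exists_basis_eq_pow_apply
    (hli : LinearIndependent R fun t : Fin (m + 1) => (N ^ (t : ℕ)) v)
    {φ : Module.Dual R M} (hφ : chainProjector N v m φ = 1) :
    ∃ b : Module.Basis (Fin (m + 1)) R M, ∀ t, b t = (N ^ (t : ℕ)) v := by
  have hspan : ⊤ ≤ Submodule.span R (Set.range fun t : Fin (m + 1) => (N ^ (t : ℕ)) v) := by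
    intro x _
    rw [← Module.End.one_apply (R := R) x, ← hφ, chainProjector_apply]
    exact Submodule.sum_mem _ fun t ht => Submodule.smul_mem _ _
      (Submodule.subset_span ⟨⟨t, Finset.mem_range.1 ht⟩, rfl⟩)
  exact ⟨.mk hli hspan, Module.Basis.mk_apply _ _⟩

end ChainProjector

section GradedProjector

theorem exists_proj_apply_eq_self_and_ne_zero {ι R M : Type*} [Fintype ι] [CommRing R]
    [AddCommGroup M] [Module R M] {P : ι → Module.End R M}
    (hP : CompleteOrthogonalIdempotents P) {A : Module.End R M} (hA : A ≠ 0) :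
    ∃ i v, P i v = v ∧ A v ≠ 0 := by
  by_contra! h
  refine hA (LinearMap.ext fun x => ?_)
  calc A x = A ((∑ i, P i) x) := by rw [hP.complete, Module.End.one_apply]
    _ = ∑ i, A (P i x) := by rw [LinearMap.sum_apply, map_sum]
    _ = 0 := Finset.sum_eq_zero fun i _ =>
      h i _ (by rw [← Module.End.mul_apply, (hP.idem i).eq])

variable {ι R M : Type*} [AddMonoid ι] [CommRing R] [AddCommGroup M] [Module R M]
  {P : ι → Module.End R M} {a i : ι} {N : Module.End R M} {v : M} {m : ℕ}

theorem proj_pow_apply_eq_self (hN : ∀ i, SemiconjBy N (P i) (P (i + a))) (hiv : P i v = v)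
    (t : ℕ) : P (i + t • a) ((N ^ t) v) = (N ^ t) v := by
  rw [← Module.End.mul_apply, ← (semiconjBy_pow_nsmul hN t i).eq, Module.End.mul_apply, hiv]

-- Since `N ^ (m - t)` raises degrees by `(m - t) • a`, the functional `φ ∘ P (i + m • a)` makes
-- the `t`-th summand of the projector see only the component of degree `i + t • a`.
theorem commute_chainProjector_proj (hP : OrthogonalIdempotents P)
    (hN : ∀ i, SemiconjBy N (P i) (P (i + a))) (hiv : P i v = v) (φ : Module.Dual R M) (j : ι) :
    Commute (chainProjector N v m (φ ∘ₗ P (i + m • a))) (P j) := by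
  classical
  refine LinearMap.ext fun x => ?_
  rw [Module.End.mul_apply, Module.End.mul_apply, chainProjector_apply, chainProjector_apply,
    map_sum]
  refine Finset.sum_congr rfl fun t ht => ?_
  have hshift : i + m • a = i + t • a + (m - t) • a := by
    rw [add_assoc, ← add_nsmul, Nat.add_sub_cancel' (Nat.le_of_lt_succ (Finset.mem_range.1 ht))]
  rw [map_smul, proj_apply_eq_ite hP (proj_pow_apply_eq_self hN hiv t), LinearMap.comp_apply,
    LinearMap.comp_apply, hshift, ← Module.End.mul_apply, ← Module.End.mul_apply,
    ← Module.End.mul_apply, ← (semiconjBy_pow_nsmul hN (m - t) _).eq, mul_assoc]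
  split_ifs with h
  · rw [h, (hP.idem _).eq]
  · rw [hP.ortho (Ne.symm h), mul_zero, LinearMap.zero_apply, map_zero, zero_smul, smul_zero]

end GradedProjector

section GradedNilpotent

variable {ι F M : Type*} [AddMonoid ι] [Field F] [AddCommGroup M] [Module F M]
  {P : ι → Module.End F M} {a i : ι} {N : Module.End F M} {v : M} {m : ℕ}

theorem exists_homogeneous_dual_pow_apply_eq_ite (hP : OrthogonalIdempotents P)
    (hN : ∀ i, SemiconjBy N (P i) (P (i + a))) (hiv : P i v = v) (hv : (N ^ m) v ≠ 0)
    (hv' : (N ^ (m + 1)) v = 0) :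
    ∃ φ : Module.Dual F M, ∀ k, (φ ∘ₗ P (i + m • a)) ((N ^ k) v) = if k = m then 1 else 0 := by
  classical
  obtain ⟨φ, hφ⟩ := exists_dual_pow_apply_eq_ite hv hv'
  refine ⟨φ, fun k => ?_⟩
  rw [LinearMap.comp_apply, proj_apply_eq_ite hP (proj_pow_apply_eq_self hN hiv k)]
  split_ifs with h hkm hkm
  · rw [hφ, if_pos hkm]
  · rw [hφ, if_neg hkm]
  · exact absurd (by rw [hkm]) h
  · exact map_zero φ

theorem exists_isGradedChainBasis [Fintype ι] [Nontrivial M] (hP : CompleteOrthogonalIdempotents P)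
    (hN : ∀ i, SemiconjBy N (P i) (P (i + a))) (hnil : IsNilpotent N)
    (hind : IsIndecomposable (insert N (Set.range P))) :
    ∃ i n, ∃ b : Module.Basis (Fin n) F M, IsGradedChainBasis P a N i b := by
  obtain ⟨m, hm, hm'⟩ : ∃ m, N ^ m ≠ 0 ∧ N ^ (m + 1) = 0 := by
    refine ⟨nilpotencyClass N - 1, pow_pred_nilpotencyClass hnil, ?_⟩
    rw [Nat.sub_add_cancel (pos_nilpotencyClass_iff.2 hnil), pow_nilpotencyClass hnil]
  obtain ⟨i, v, hiv, hv⟩ := exists_proj_apply_eq_self_and_ne_zero hP hm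
  have hv' : (N ^ (m + 1)) v = 0 := by rw [hm', LinearMap.zero_apply]
  obtain ⟨φ, hφ⟩ :=
    exists_homogeneous_dual_pow_apply_eq_ite hP.toOrthogonalIdempotents hN hiv hv hv'
  have hπ : chainProjector N v m (φ ∘ₗ P (i + m • a)) = 1 := by
    refine (hind _ (isIdempotentElem_chainProjector hφ) ?_).resolve_left fun h0 => ?_
    · rintro _ (rfl | ⟨j, rfl⟩)
      · exact commute_chainProjector _ hm'
      · exact commute_chainProjector_proj hP.toOrthogonalIdempotents hN hiv φ j
    · have := chainProjector_apply_pow_apply hφ (Finset.self_mem_range_succ m)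
      exact hv (by rw [← this, h0, LinearMap.zero_apply])
  obtain ⟨b, hb⟩ := exists_basis_eq_pow_apply (linearIndependent_pow_apply hv hv') hπ
  refine ⟨i, m + 1, b, fun t => ?_, fun t => by rw [hb, proj_pow_apply_eq_self hN hiv]⟩
  rw [hb, ← Module.End.mul_apply, ← pow_succ']
  split_ifs with h
  · rw [hb]
  · rw [Module.End.pow_map_zero_of_le (by omega) hv']

end GradedNilpotent

section TotalSpace

variable {K : ℕ} {F : Type} [Field F] {d : Fin (K + 1) → ℕ}

/-- The total space `⨁ i, F ^ d i` of the representations of dimension vector `d`. -/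
abbrev Tot (F : Type) (d : Fin (K + 1) → ℕ) : Type := ∀ i, Fin (d i) → F

/-- The degree-one operator on the total space that assembles the arrows of a representation. -/
noncomputable def totN (r : CRep K F d) : Module.End F (Tot F d) :=
  (LinearEquiv.piCongrLeft F (fun j => Fin (d j) → F) (Equiv.addRight 1)).toLinearMap ∘ₗ
    LinearMap.pi fun i => (r i).mulVecLin ∘ₗ LinearMap.proj i

/-- The degree-zero operator on the total space given by a square matrix at every vertex. -/
noncomputable def totMap (F : Type) [Field F] (d : Fin (K + 1) → ℕ) :
    (∀ i, Matrix (Fin (d i)) (Fin (d i)) F) →+* Module.End F (Tot F d) where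
  toFun g := LinearMap.pi fun i => (g i).mulVecLin ∘ₗ LinearMap.proj i
  map_one' := by ext; simp
  map_mul' g h := LinearMap.ext fun y => funext fun i => by simp
  map_zero' := by ext; simp
  map_add' g h := LinearMap.ext fun y => funext fun i => by simp

/-- The projector of the total space onto the summand at the vertex `i`. -/
noncomputable def totP (F : Type) [Field F] (d : Fin (K + 1) → ℕ) (i : Fin (K + 1)) :
    Module.End F (Tot F d) :=
  totMap F d (Pi.single i 1)

theorem totN_apply (r : CRep K F d) (y : Tot F d) (i : Fin (K + 1)) :
    totN r y (i + 1) = r i *ᵥ y i :=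
  Equiv.piCongrLeft_apply_apply (fun j => Fin (d j) → F) (Equiv.addRight (1 : Fin (K + 1)))
    (fun i => r i *ᵥ y i) i

theorem totMap_apply (g : ∀ i, Matrix (Fin (d i)) (Fin (d i)) F) (y : Tot F d) (i : Fin (K + 1)) :
    totMap F d g y i = g i *ᵥ y i :=
  rfl

theorem totMap_injective : Function.Injective (totMap F d) := fun g h hgh =>
  funext fun i => Matrix.ext_of_mulVec_single fun k => by
    simpa [totMap_apply] using congrFun (LinearMap.congr_fun hgh (Pi.single i (Pi.single k 1))) i

theorem totP_apply (i : Fin (K + 1)) (y : Tot F d) : totP F d i y = Pi.single i (y i) := by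
  funext j
  rw [totP, totMap_apply]
  obtain rfl | h := eq_or_ne j i
  · simp
  · simp [h]

theorem totP_complete : CompleteOrthogonalIdempotents (totP F d) :=
  (CompleteOrthogonalIdempotents.single _).map (totMap F d)

theorem semiconjBy_totN_totP (r : CRep K F d) (i : Fin (K + 1)) :
    SemiconjBy (totN r) (totP F d i) (totP F d (i + 1)) := by
  refine LinearMap.ext fun y => funext fun j => ?_
  obtain ⟨k, rfl⟩ := (Equiv.addRight (1 : Fin (K + 1))).surjective j
  simp only [Module.End.mul_apply, totP_apply, Equiv.coe_addRight, totN_apply]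
  obtain rfl | h := eq_or_ne k i
  · simp
  · simp [h]

theorem semiconjBy_totMap_iff {r r' : CRep K F d}
    {g : ∀ i, Matrix (Fin (d i)) (Fin (d i)) F} :
    SemiconjBy (totMap F d g) (totN r) (totN r') ↔ ∀ i, g (i + 1) * r i = r' i * g i := by
  have happly (y : Tot F d) (i : Fin (K + 1)) :
      (totMap F d g * totN r) y (i + 1) = (g (i + 1) * r i) *ᵥ y i ∧
      (totN r' * totMap F d g) y (i + 1) = (r' i * g i) *ᵥ y i := by
    simp only [Module.End.mul_apply, totMap_apply, totN_apply, mulVec_mulVec, and_self]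
  constructor
  · intro h i
    refine Matrix.ext_of_mulVec_single fun k => ?_
    have := congrFun (LinearMap.congr_fun h (Pi.single i (Pi.single k 1))) (i + 1)
    rwa [(happly _ i).1, (happly _ i).2, Pi.single_eq_same] at this
  · refine fun h => LinearMap.ext fun y => funext fun j => ?_
    obtain ⟨i, rfl⟩ := (Equiv.addRight (1 : Fin (K + 1))).surjective j
    rw [Equiv.coe_addRight, (happly y i).1, (happly y i).2, h i]

theorem commute_totMap_totP (g : ∀ i, Matrix (Fin (d i)) (Fin (d i)) F) (j : Fin (K + 1)) :
    Commute (totMap F d g) (totP F d j) := by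
  refine Commute.map ?_ (totMap F d)
  ext i : 1
  obtain rfl | h := eq_or_ne i j
  · simp
  · simp [h]

theorem exists_totMap_eq {G : Module.End F (Tot F d)} (hG : ∀ j, Commute G (totP F d j)) :
    ∃ g, totMap F d g = G := by
  refine ⟨fun i => LinearMap.toMatrix'
    (LinearMap.proj i ∘ₗ G ∘ₗ LinearMap.single F (fun j => Fin (d j) → F) i),
    LinearMap.ext fun y => funext fun i => ?_⟩
  rw [totMap_apply, LinearMap.toMatrix'_mulVec]
  simpa [totP_apply] using congrFun (LinearMap.congr_fun (hG i) y) i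

theorem isUnit_totMap_iff {g : ∀ i, Matrix (Fin (d i)) (Fin (d i)) F} :
    IsUnit (totMap F d g) ↔ ∀ i, IsUnit (g i) := by
  rw [← Pi.isUnit_iff]
  refine ⟨fun h => ?_, fun h => h.map _⟩
  obtain ⟨u, hu⟩ := h
  have hcomm (j : Fin (K + 1)) : Commute (↑u⁻¹) (totP F d j) :=
    (hu ▸ commute_totMap_totP g j : Commute (u : Module.End F (Tot F d)) _).units_inv_left
  obtain ⟨g', hg'⟩ := exists_totMap_eq hcomm
  refine isUnit_iff_exists.2 ⟨g', totMap_injective ?_, totMap_injective ?_⟩ <;>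
    simp [hg', ← hu]

end TotalSpace

section Isomorphism

variable {K : ℕ} {F : Type} [Field F] {d : Fin (K + 1) → ℕ} {r r' r'' : CRep K F d}

theorem cIso_iff_exists_semiconjBy : CIso K F d r r' ↔ ∃ G : Module.End F (Tot F d),
    IsUnit G ∧ (∀ j, Commute G (totP F d j)) ∧ SemiconjBy G (totN r) (totN r') := by
  constructor
  · rintro ⟨g, hg, h⟩
    exact ⟨totMap F d g, isUnit_totMap_iff.2 hg, commute_totMap_totP g, semiconjBy_totMap_iff.2 h⟩
  · rintro ⟨G, hG, hGP, h⟩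
    obtain ⟨g, rfl⟩ := exists_totMap_eq hGP
    exact ⟨g, isUnit_totMap_iff.1 hG, semiconjBy_totMap_iff.1 h⟩

namespace CIso

theorem refl (r : CRep K F d) : CIso K F d r r :=
  cIso_iff_exists_semiconjBy.2 ⟨1, isUnit_one, fun _ => .one_left _, .one_left _⟩

theorem symm (h : CIso K F d r r') : CIso K F d r' r := by
  obtain ⟨_, ⟨G, rfl⟩, hGP, h⟩ := cIso_iff_exists_semiconjBy.1 h
  exact cIso_iff_exists_semiconjBy.2
    ⟨_, G⁻¹.isUnit, fun j => (hGP j).units_inv_left, h.units_inv_symm_left⟩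

theorem trans (h : CIso K F d r r') (h' : CIso K F d r' r'') : CIso K F d r r'' := by
  obtain ⟨G, hG, hGP, h⟩ := cIso_iff_exists_semiconjBy.1 h
  obtain ⟨G', hG', hGP', h'⟩ := cIso_iff_exists_semiconjBy.1 h'
  exact cIso_iff_exists_semiconjBy.2
    ⟨G' * G, hG'.mul hG, fun j => (hGP' j).mul_left (hGP j), h'.mul_left h⟩

theorem equivalence : Equivalence (CIso K F d) :=
  ⟨refl, symm, trans⟩

theorem mapCRep {F' : Type} [Field F'] (φ : F →+* F') (h : CIso K F d r r') :
    CIso K F' d (mapCRep K d φ r) (mapCRep K d φ r') := by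
  obtain ⟨g, hg, h⟩ := h
  refine ⟨fun i => (g i).map φ, fun i => (hg i).map φ.mapMatrix, fun i => ?_⟩
  simpa only [_root_.mapCRep, Matrix.map_mul] using congrArg (·.map φ) (h i)

theorem cDecomp (h : CIso K F d r r') (h' : CDecomp K F d r') : CDecomp K F d r := by
  obtain ⟨d₁, d₂, h₁, h₂, rfl, r₁, r₂, hsum⟩ := h'
  exact ⟨d₁, d₂, h₁, h₂, rfl, r₁, r₂, h.trans hsum⟩

theorem cAbsIndec (h : CIso K F d r r') (h' : CAbsIndec K F d r) : CAbsIndec K F d r' :=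
  fun F' _ φ => ⟨(h' F' φ).1, fun hdec => (h' F' φ).2 ((h.mapCRep φ).cDecomp hdec)⟩

end CIso

end Isomorphism

section BlockProjector

variable {R p q p' q' : Type*} [Ring R] [DecidableEq p] [DecidableEq p']

/-- The matrix of the projection of a direct sum onto its first summand. -/
def inlProj (R p q : Type*) [Zero R] [One R] [DecidableEq p] : Matrix (p ⊕ q) (p ⊕ q) R :=
  fromBlocks 1 0 0 0

theorem inlProj_eq_zero_iff [Nontrivial R] : inlProj R p q = 0 ↔ IsEmpty p := by
  refine ⟨fun h => ⟨fun i => ?_⟩, fun _ => ?_⟩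
  · simpa [inlProj] using congrFun (congrFun h (.inl i)) (.inl i)
  · ext (i | i) (j | j) <;> first | exact isEmptyElim i | exact isEmptyElim j | rfl

theorem inlProj_eq_one_iff [Nontrivial R] [DecidableEq q] : inlProj R p q = 1 ↔ IsEmpty q := by
  refine ⟨fun h => ⟨fun i => ?_⟩, fun _ => ?_⟩
  · simpa [inlProj] using congrFun (congrFun h (.inr i)) (.inr i)
  · rw [← fromBlocks_one, inlProj, Subsingleton.elim (1 : Matrix q q R) 0]

variable [Fintype p] [Fintype q]

theorem isIdempotentElem_inlProj : IsIdempotentElem (inlProj R p q) := by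
  simp [IsIdempotentElem, inlProj, fromBlocks_multiply]

variable [Fintype p'] [Fintype q']

theorem fromBlocks_mul_inlProj (A : Matrix p' p R) (B : Matrix q' q R) :
    fromBlocks A 0 0 B * inlProj R p q = inlProj R p' q' * fromBlocks A 0 0 B := by
  simp [inlProj, fromBlocks_multiply]

theorem exists_eq_fromBlocks_of_mul_inlProj_eq {A : Matrix (p' ⊕ q') (p ⊕ q) R}
    (hA : A * inlProj R p q = inlProj R p' q' * A) :
    ∃ A₁ A₂, A = fromBlocks A₁ 0 0 A₂ := by
  rw [← fromBlocks_toBlocks A, inlProj, inlProj, fromBlocks_multiply, fromBlocks_multiply,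
    fromBlocks_inj] at hA
  simp only [Matrix.mul_one, Matrix.mul_zero, add_zero, Matrix.one_mul, Matrix.zero_mul] at hA
  refine ⟨A.toBlocks₁₁, A.toBlocks₂₂, ?_⟩
  conv_lhs => rw [← fromBlocks_toBlocks A, ← hA.2.1, hA.2.2.1]

variable {F : Type*} [Field F] {n : ℕ}

theorem exists_basis_of_isIdempotentElem {E : Matrix (Fin n) (Fin n) F}
    (hE : IsIdempotentElem E) : ∃ p q, ∃ b : Module.Basis (Fin p ⊕ Fin q) F (Fin n → F),
      (∀ j, E *ᵥ b (.inl j) = b (.inl j)) ∧ ∀ j, E *ᵥ b (.inr j) = 0 := by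
  have hf : IsIdempotentElem (toLin' E) := hE.map toLinAlgEquiv'
  let U := LinearMap.range (toLin' E)
  let W := LinearMap.ker (toLin' E)
  let b := ((Module.finBasis F U).prod (Module.finBasis F W)).map
    (Submodule.prodEquivOfIsCompl U W (LinearMap.IsIdempotentElem.isCompl hf))
  refine ⟨_, _, b, fun j => ?_, fun j => ?_⟩
  · obtain ⟨y, hy⟩ := (Module.finBasis F U j).2
    have hbj : b (.inl j) = E *ᵥ y := by simp [b, ← hy]
    rw [hbj, mulVec_mulVec, hE.eq]
  · have hbj : b (.inr j) = Module.finBasis F W j := by simp [b]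
    rw [hbj]
    exact (Module.finBasis F W j).2

theorem exists_inlProj_conj_of_isIdempotentElem {E : Matrix (Fin n) (Fin n) F}
    (hE : IsIdempotentElem E) : ∃ (p q : ℕ) (g : Matrix (Fin p ⊕ Fin q) (Fin n) F)
      (g' : Matrix (Fin n) (Fin p ⊕ Fin q) F),
      n = p + q ∧ g * g' = 1 ∧ g' * g = 1 ∧ E * g' = g' * inlProj F (Fin p) (Fin q) := by
  obtain ⟨p, q, b, hb, hb'⟩ := exists_basis_of_isIdempotentElem hE
  refine ⟨p, q, b.toMatrix (Pi.basisFun F (Fin n)), (Pi.basisFun F (Fin n)).toMatrix b, ?_,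
    Module.Basis.toMatrix_mul_toMatrix_flip _ _, Module.Basis.toMatrix_mul_toMatrix_flip _ _, ?_⟩
  · simpa using Fintype.card_congr (b.indexEquiv (Pi.basisFun F (Fin n))).symm
  · ext i (j | j)
    · simpa [inlProj, mul_apply, one_apply, Module.Basis.toMatrix_apply, mulVec, dotProduct]
        using congrFun (hb j) i
    · simpa [inlProj, mul_apply, Module.Basis.toMatrix_apply, mulVec, dotProduct]
        using congrFun (hb' j) i

end BlockProjector

section Decomposition

variable {K : ℕ} {F : Type} [Field F] {d d₁ d₂ : Fin (K + 1) → ℕ} {r : CRep K F d}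

/-- The family of matrices projecting a direct sum of representations of dimension vectors `d₁`
and `d₂` onto its first summand. -/
def fstProj (F : Type) [Field F] (d₁ d₂ : Fin (K + 1) → ℕ) (i : Fin (K + 1)) :
    Matrix (Fin ((d₁ + d₂) i)) (Fin ((d₁ + d₂) i)) F :=
  reindex finSumFinEquiv finSumFinEquiv (inlProj F (Fin (d₁ i)) (Fin (d₂ i)))

theorem isIdempotentElem_fstProj : IsIdempotentElem (fstProj F d₁ d₂) := funext fun i =>
  (isIdempotentElem_inlProj (R := F) (p := Fin (d₁ i)) (q := Fin (d₂ i))).map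
    (reindexAlgEquiv F F finSumFinEquiv)

theorem fstProj_mul_cdsum (r₁ : CRep K F d₁) (r₂ : CRep K F d₂) (i : Fin (K + 1)) :
    fstProj F d₁ d₂ (i + 1) * cdsum K F r₁ r₂ i = cdsum K F r₁ r₂ i * fstProj F d₁ d₂ i := by
  simp only [fstProj, cdsum, reindex_apply]
  erw [submatrix_mul_equiv, submatrix_mul_equiv, fromBlocks_mul_inlProj]

theorem fstProj_eq_zero_iff : fstProj F d₁ d₂ = 0 ↔ d₁ = 0 := by
  have hempty (i : Fin (K + 1)) : IsEmpty (Fin (d₁ i)) ↔ d₁ i = 0 := by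
    rw [← Fintype.card_eq_zero_iff, Fintype.card_fin]
  simp only [funext_iff (f := d₁), Pi.zero_apply, ← hempty]
  refine funext_iff.trans (forall_congr' fun i => ?_)
  exact ((reindex _ _).injective.eq_iff' rfl).trans inlProj_eq_zero_iff

theorem fstProj_eq_one_iff : fstProj F d₁ d₂ = 1 ↔ d₂ = 0 := by
  have hempty (i : Fin (K + 1)) : IsEmpty (Fin (d₂ i)) ↔ d₂ i = 0 := by
    rw [← Fintype.card_eq_zero_iff, Fintype.card_fin]
  simp only [funext_iff (f := d₂), Pi.zero_apply, ← hempty]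
  refine funext_iff.trans (forall_congr' fun i => ?_)
  exact ((reindex _ _).injective.eq_iff' (submatrix_one_equiv _)).trans inlProj_eq_one_iff

theorem not_cDecomp_of_isIndecomposable
    (h : IsIndecomposable (insert (totN r) (Set.range (totP F d)))) : ¬CDecomp K F d r := by
  rintro ⟨d₁, d₂, h₁, h₂, rfl, r₁, r₂, hiso⟩
  obtain ⟨_, ⟨u, rfl⟩, hup, hu⟩ := cIso_iff_exists_semiconjBy.1 hiso
  set E := totMap F _ (fstProj F d₁ d₂)
  have hE : IsIdempotentElem E := isIdempotentElem_fstProj.map (totMap F _)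
  have hEN : Commute E (totN (cdsum K F r₁ r₂)) :=
    semiconjBy_totMap_iff.2 (fstProj_mul_cdsum r₁ r₂)
  have hidem : IsIdempotentElem (↑u⁻¹ * E * u) := by
    simp only [IsIdempotentElem, mul_assoc, u.mul_inv_cancel_left]
    rw [← mul_assoc E, hE.eq]
  have hcomm : ∀ s ∈ insert (totN r) (Set.range (totP F (d₁ + d₂))), Commute (↑u⁻¹ * E * u) s := by
    rintro _ (rfl | ⟨j, rfl⟩)
    · exact (hu.units_inv_symm_left.mul_left hEN).mul_left hu
    · exact ((hup j).units_inv_left.mul_left (commute_totMap_totP _ j)).mul_left (hup j)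
  rcases h _ hidem hcomm with h0 | h1
  · refine h₁ (fstProj_eq_zero_iff (F := F) (d₂ := d₂).1 (totMap_injective ?_))
    simpa [E] using h0
  · refine h₂ (fstProj_eq_one_iff (F := F) (d₁ := d₁).1 (totMap_injective ?_))
    rwa [mul_assoc, Units.inv_mul_eq_iff_eq_mul, mul_one, u.isUnit.mul_eq_right,
      ← map_one (totMap F _)] at h1

theorem cIso_cdsum_of_mul_eq {r : CRep K F (d₁ + d₂)} {r₁ : CRep K F d₁} {r₂ : CRep K F d₂}
    {g : ∀ i, Matrix (Fin (d₁ i) ⊕ Fin (d₂ i)) (Fin (d₁ i + d₂ i)) F}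
    {g' : ∀ i, Matrix (Fin (d₁ i + d₂ i)) (Fin (d₁ i) ⊕ Fin (d₂ i)) F}
    (hg : ∀ i, g i * g' i = 1) (hg' : ∀ i, g' i * g i = 1)
    (hr : ∀ i, g (i + 1) * r i = fromBlocks (r₁ i) 0 0 (r₂ i) * g i) :
    CIso K F (d₁ + d₂) r (cdsum K F r₁ r₂) := by
  refine ⟨fun i => (g i).submatrix finSumFinEquiv.symm id, fun i => ?_, fun i => ?_⟩
  · refine isUnit_iff_exists.2 ⟨(g' i).submatrix id finSumFinEquiv.symm, ?_, ?_⟩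
    · erw [← submatrix_mul _ _ _ _ _ Function.bijective_id, hg, submatrix_one_equiv]
    · erw [submatrix_mul_equiv, hg', submatrix_id_id]
  · erw [cdsum, reindex_apply, submatrix_mul_equiv, ← hr,
      submatrix_mul _ _ _ id _ Function.bijective_id, submatrix_id_id]

theorem cDecomp_of_not_isIndecomposable
    (h : ¬IsIndecomposable (insert (totN r) (Set.range (totP F d)))) : CDecomp K F d r := by
  unfold IsIndecomposable at h
  push Not at h
  obtain ⟨e, he, hcomm, he0, he1⟩ := h
  obtain ⟨E, rfl⟩ := exists_totMap_eq fun j => hcomm _ (.inr ⟨j, rfl⟩)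
  have hE : IsIdempotentElem E := totMap_injective (by rw [map_mul]; exact he)
  have hEr : ∀ i, E (i + 1) * r i = r i * E i := semiconjBy_totMap_iff.1 (hcomm _ (.inl rfl))
  choose p q g g' hd hg hg' hEg' using
    fun i => exists_inlProj_conj_of_isIdempotentElem (congrFun hE i)
  obtain rfl : d = p + q := funext hd
  have hEg (i : Fin (K + 1)) : E i = g' i * inlProj F (Fin (p i)) (Fin (q i)) * g i := by
    rw [← hEg', Matrix.mul_assoc, hg', Matrix.mul_one]
  have hgE (i : Fin (K + 1)) : g i * E i = inlProj F (Fin (p i)) (Fin (q i)) * g i := by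
    rw [hEg, Matrix.mul_assoc, ← Matrix.mul_assoc, hg, Matrix.one_mul]
  choose r₁ r₂ hblock using fun i =>
    exists_eq_fromBlocks_of_mul_inlProj_eq (A := g (i + 1) * r i * g' i) <| by
      rw [Matrix.mul_assoc, ← hEg' i, ← Matrix.mul_assoc, Matrix.mul_assoc (g (i + 1)),
        ← hEr i, ← Matrix.mul_assoc, hgE, Matrix.mul_assoc, Matrix.mul_assoc, Matrix.mul_assoc]
  refine ⟨p, q, ?_, ?_, rfl, r₁, r₂, cIso_cdsum_of_mul_eq hg hg' fun i => ?_⟩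
  · rintro rfl
    refine he0 ((congrArg _ (funext fun i => ?_)).trans (map_zero _))
    rw [hEg, inlProj_eq_zero_iff.2 (inferInstanceAs (IsEmpty (Fin 0))), Matrix.mul_zero,
      Matrix.zero_mul, Pi.zero_apply]
  · rintro rfl
    refine he1 ((congrArg _ (funext fun i => ?_)).trans (map_one _))
    rw [hEg, inlProj_eq_one_iff.2 (inferInstanceAs (IsEmpty (Fin 0))), Matrix.mul_one, hg',
      Pi.one_apply]
  · rw [← hblock, Matrix.mul_assoc _ (g' i), hg', Matrix.mul_one]

theorem isIndecomposable_iff_not_cDecomp :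
    IsIndecomposable (insert (totN r) (Set.range (totP F d))) ↔ ¬CDecomp K F d r :=
  ⟨not_cDecomp_of_isIndecomposable, not_imp_comm.1 cDecomp_of_not_isIndecomposable⟩

end Decomposition

section CyclicIndex

variable {K : ℕ}

theorem eq_apply_zero_of_apply_add_one_eq {α : Type*} {f : Fin (K + 1) → α}
    (hf : ∀ i, f (i + 1) = f i) (i : Fin (K + 1)) : f i = f 0 := by
  induction i using Fin.induction with
  | zero => rfl
  | succ i ih => rw [← Fin.coeSucc_eq_succ, hf, ih]

theorem succ_nsmul_one_eq_zero : (K + 1) • (1 : Fin (K + 1)) = 0 := by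
  simpa using card_nsmul_eq_zero' (x := (1 : Fin (K + 1)))

end CyclicIndex

section Fitting

variable {K : ℕ} {F : Type} [Field F] {d : Fin (K + 1) → ℕ} {r : CRep K F d}

-- The power `totN r ^ (K + 1)` preserves every vertex, so Fitting's lemma applies to it.
theorem isNilpotent_or_isUnit_totN
    (h : IsIndecomposable (insert (totN r) (Set.range (totP F d)))) :
    IsNilpotent (totN r) ∨ IsUnit (totN r) := by
  have hcomm : ∀ s ∈ insert (totN r) (Set.range (totP F d)), Commute (totN r ^ (K + 1)) s := by
    rintro _ (rfl | ⟨j, rfl⟩)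
    · exact Commute.pow_self _ _
    · have := semiconjBy_pow_nsmul (semiconjBy_totN_totP r) (K + 1) j
      rwa [succ_nsmul_one_eq_zero, add_zero] at this
  rw [← IsNilpotent.pow_iff_pos K.succ_ne_zero, ← isUnit_pow_succ_iff (n := K)]
  exact h.isNilpotent_or_isUnit (Algebra.IsIntegral.isIntegral (R := F) _) hcomm

theorem isUnit_totN_iff : IsUnit (totN r) ↔ ∀ i, Function.Bijective (r i).mulVec := by
  rw [Module.End.isUnit_iff, totN, LinearMap.coe_comp, LinearEquiv.coe_coe,
    (LinearEquiv.bijective _).of_comp_iff']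
  change Function.Bijective (Pi.map fun i => (r i).mulVec) ↔ _
  refine ⟨fun h i => ⟨Pi.map_injective.1 h.1 i, fun z => ?_⟩, Function.Bijective.piMap⟩
  obtain ⟨y, hy⟩ := h.2 (Pi.single i z)
  exact ⟨y i, by simpa using congrFun hy i⟩

theorem dim_eq_of_isUnit_totN (h : IsUnit (totN r)) (i : Fin (K + 1)) : d i = d 0 := by
  refine eq_apply_zero_of_apply_add_one_eq (f := d) (fun i => ?_) i
  simpa using (LinearEquiv.ofBijective (r i).mulVecLin (isUnit_totN_iff.1 h i)).finrank_eq.symm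

end Fitting

section StringDimension

variable {K : ℕ}

/-- The dimension vector of the string representation `e₀ ↦ e₁ ↦ ⋯ ↦ eₙ₋₁ ↦ 0` of length `n`
whose generator `e₀` sits at the vertex `i`: its value at `j` is the number of `t < n` with
`i + t = j` in the cyclic index set. -/
def stringDim (n : ℕ) (i j : Fin (K + 1)) : ℕ :=
  n.count fun t => i + t • (1 : Fin (K + 1)) = j

theorem card_fiber_eq_stringDim (n : ℕ) (i j : Fin (K + 1)) :
    Fintype.card {t : Fin n // i + (t : ℕ) • (1 : Fin (K + 1)) = j} = stringDim n i j := by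
  rw [stringDim, Nat.count_eq_card_filter_range, ← Nat.Iio_eq_range, ← Fin.map_valEmbedding_univ,
    Finset.filter_map, Finset.card_map, Fintype.card_subtype]
  rfl

/-- The vectors of a string of length `n` starting at `i`, sorted by vertex. -/
noncomputable def stringEquiv (n : ℕ) (i : Fin (K + 1)) :
    Fin n ≃ Σ j, Fin (stringDim n i j) :=
  (Equiv.sigmaFiberEquiv fun t : Fin n => i + (t : ℕ) • (1 : Fin (K + 1))).symm.trans
    (Equiv.sigmaCongrRight fun j => Fintype.equivFinOfCardEq (card_fiber_eq_stringDim n i j))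

theorem stringEquiv_fst (n : ℕ) (i : Fin (K + 1)) (t : Fin n) :
    (stringEquiv n i t).1 = i + (t : ℕ) • (1 : Fin (K + 1)) :=
  rfl

theorem sum_stringDim (n : ℕ) (i : Fin (K + 1)) : ∑ j, stringDim n i j = n := by
  simpa using (Fintype.card_congr (stringEquiv n i)).symm

end StringDimension

theorem IsGradedChainBasis.finrank_range_proj {ι R M : Type*} [AddMonoid ι] [DecidableEq ι]
    [CommRing R] [Nontrivial R] [AddCommGroup M] [Module R M] {n : ℕ} {P : ι → Module.End R M}
    {a i : ι} {N : Module.End R M} {b : Module.Basis (Fin n) R M}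
    (hP : OrthogonalIdempotents P) (hb : IsGradedChainBasis P a N i b) (j : ι) :
    Module.finrank R (LinearMap.range (P j)) =
      Fintype.card {t : Fin n // i + (t : ℕ) • a = j} := by
  have hrange : LinearMap.range (P j) =
      Submodule.span R (Set.range fun t : {t : Fin n // i + (t : ℕ) • a = j} => b t) := by
    rw [LinearMap.range_eq_map, ← b.span_eq, Submodule.map_span, ← Set.range_comp]
    refine le_antisymm (Submodule.span_le.2 ?_) (Submodule.span_mono ?_)
    · rintro _ ⟨t, rfl⟩
      rw [Function.comp_apply, proj_apply_eq_ite hP (hb.proj_apply_self t)]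
      split_ifs with h
      · exact Submodule.subset_span ⟨⟨t, h.symm⟩, rfl⟩
      · exact zero_mem _
    · rintro _ ⟨⟨t, rfl⟩, rfl⟩
      exact ⟨t, hb.proj_apply_self t⟩
  rw [hrange]
  exact finrank_span_eq_card (b.linearIndependent.comp _ Subtype.val_injective)

section StringRepresentation

variable {K n : ℕ} {F : Type} [Field F] {d : Fin (K + 1) → ℕ} {i : Fin (K + 1)} {r r' : CRep K F d}
  {b b' : Module.Basis (Fin n) F (Tot F d)}

theorem finrank_range_totP (j : Fin (K + 1)) :
    Module.finrank F (LinearMap.range (totP F d j)) = d j := by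
  have hP : totP F d j = LinearMap.single F _ j ∘ₗ LinearMap.proj j :=
    LinearMap.ext (totP_apply j)
  rw [hP, LinearMap.range_comp, LinearMap.range_eq_top.2 (LinearMap.proj_surjective j),
    Submodule.map_top,
    LinearMap.finrank_range_of_inj (Pi.single_injective (M := fun i => Fin (d i) → F) j)]
  simp

theorem eq_stringDim_of_isGradedChainBasis (hb : IsGradedChainBasis (totP F d) 1 (totN r) i b) :
    d = stringDim n i := funext fun j => by
  rw [← finrank_range_totP (F := F) (d := d) j,
    hb.finrank_range_proj totP_complete.toOrthogonalIdempotents, card_fiber_eq_stringDim]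

/-- The string representation of length `n` generated at the vertex `i`. -/
noncomputable def stringRep (F : Type) [Field F] (n : ℕ) (i : Fin (K + 1)) :
    CRep K F (stringDim n i) := fun j => Matrix.of fun x y =>
  if ((stringEquiv n i).symm ⟨j + 1, x⟩ : ℕ) = (stringEquiv n i).symm ⟨j, y⟩ + 1 then 1 else 0

/-- The basis of the total space of the string representation formed by the vectors of the
string. -/
noncomputable def stringBasis (F : Type) [Field F] (n : ℕ) (i : Fin (K + 1)) :
    Module.Basis (Fin n) F (Tot F (stringDim n i)) :=
  (Pi.basis fun _ => Pi.basisFun F _).reindex (stringEquiv n i).symm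

theorem stringBasis_apply (t : Fin n) : stringBasis F n i t =
    Pi.single (stringEquiv n i t).1 (Pi.single (stringEquiv n i t).2 1) := by
  simp [stringBasis]

theorem stringBasis_apply_apply (t : Fin n) (j : Fin (K + 1)) (x : Fin (stringDim n i j)) :
    stringBasis F n i t j x = if (stringEquiv n i).symm ⟨j, x⟩ = t then 1 else 0 := by
  simp only [Equiv.symm_apply_eq]
  rw [stringBasis_apply]
  generalize stringEquiv n i t = w
  obtain ⟨k, y⟩ := w
  obtain rfl | h := eq_or_ne j k
  · simp [Pi.single_apply]
  · rw [Pi.single_eq_of_ne h, Pi.zero_apply, if_neg fun h' => h (congrArg Sigma.fst h')]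

theorem mapCRep_stringRep {F' : Type} [Field F'] (φ : F →+* F') :
    mapCRep K _ φ (stringRep F n i) = stringRep F' n i := by
  refine funext fun j => Matrix.ext fun x y => ?_
  simp [mapCRep, stringRep, apply_ite φ]

theorem totN_stringRep_stringBasis_apply (t : Fin n) (j : Fin (K + 1))
    (x : Fin (stringDim n i (j + 1))) :
    totN (stringRep F n i) (stringBasis F n i t) (j + 1) x =
      if ((stringEquiv n i).symm ⟨j + 1, x⟩ : ℕ) = t + 1 then 1 else 0 := by
  obtain ⟨⟨k, y⟩, hk⟩ : ∃ w, stringEquiv n i t = w := ⟨_, rfl⟩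
  rw [totN_apply, stringBasis_apply, hk]
  obtain rfl | hj := eq_or_ne j k
  · simp [stringRep, ← hk]
  · rw [Pi.single_eq_of_ne hj, mulVec_zero, Pi.zero_apply, if_neg]
    intro h
    have hfst := stringEquiv_fst n i ((stringEquiv n i).symm ⟨j + 1, x⟩)
    rw [h, succ_nsmul, ← add_assoc, ← stringEquiv_fst, hk, Equiv.apply_symm_apply] at hfst
    exact hj (add_right_cancel hfst)

theorem isGradedChainBasis_stringBasis :
    IsGradedChainBasis (totP F (stringDim n i)) 1 (totN (stringRep F n i)) i
      (stringBasis F n i) where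
  isChainBasis t := by
    refine funext fun j => funext fun x => ?_
    obtain ⟨j, rfl⟩ : ∃ k, k + 1 = j := ⟨j - 1, sub_add_cancel j 1⟩
    rw [totN_stringRep_stringBasis_apply]
    split_ifs with h h' h'
    · rw [stringBasis_apply_apply, if_pos (Fin.ext h)]
    · omega
    · rw [stringBasis_apply_apply, if_neg fun h'' => h (congrArg Fin.val h'')]
    · rfl
  proj_apply_self t := by
    rw [totP_apply, stringBasis_apply, ← stringEquiv_fst, Pi.single_eq_same]

theorem cAbsIndec_stringRep (hn : 0 < n) : CAbsIndec K F _ (stringRep F n i) := by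
  intro F' _ φ
  rw [mapCRep_stringRep]
  refine ⟨fun h => ?_, isIndecomposable_iff_not_cDecomp.1 fun e he hcomm => ?_⟩
  · have := sum_stringDim n i
    simp_all
  · exact isGradedChainBasis_stringBasis.isChainBasis.isIndecomposable e he
      fun s hs => hcomm s (.inl hs)

theorem cIso_of_isGradedChainBasis (hb : IsGradedChainBasis (totP F d) 1 (totN r) i b)
    (hb' : IsGradedChainBasis (totP F d) 1 (totN r') i b') : CIso K F d r r' :=
  cIso_iff_exists_semiconjBy.2
    (hb.exists_isUnit_semiconjBy totP_complete.toOrthogonalIdempotents hb')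

end StringRepresentation

section JordanBlock

variable {R : Type*} [CommRing R] {l : ℕ}

/-- The nilpotent Jordan block of size `l`, sending each standard basis vector to the next one. -/
def shiftMatrix (R : Type*) [CommRing R] (l : ℕ) : Matrix (Fin l) (Fin l) R :=
  of fun a b => if (a : ℕ) = b + 1 then 1 else 0

/-- The (lower triangular) Jordan block of size `l` with eigenvalue `c`. -/
def jordanBlock (l : ℕ) (c : R) : Matrix (Fin l) (Fin l) R :=
  algebraMap R _ c + shiftMatrix R l

theorem isChainBasis_basisFun :
    IsChainBasis (toLinAlgEquiv' (shiftMatrix R l)) (Pi.basisFun R (Fin l)) := by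
  refine fun t => funext fun a => ?_
  rw [toLinAlgEquiv'_apply, Pi.basisFun_apply, mulVec_single_one, col_apply, shiftMatrix, of_apply]
  split_ifs with h h' h'
  · rw [Pi.basisFun_apply, Pi.single_apply, if_pos (Fin.ext h)]
  · omega
  · rw [Pi.basisFun_apply, Pi.single_apply, if_neg fun h'' => h (congrArg Fin.val h'')]
  · rfl

theorem isNilpotent_shiftMatrix : IsNilpotent (shiftMatrix R l) :=
  (IsNilpotent.map_iff toLinAlgEquiv'.injective).1 isChainBasis_basisFun.isNilpotent

theorem isUnit_jordanBlock {c : R} (hc : IsUnit c) : IsUnit (jordanBlock l c) :=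
  isNilpotent_shiftMatrix.isUnit_add_left_of_commute (hc.map (algebraMap R _))
    (Algebra.commutes c _).symm

theorem jordanBlock_map {S : Type*} [CommRing S] (f : R →+* S) (c : R) :
    (jordanBlock l c).map f = jordanBlock l (f c) := by
  ext a b
  simp [jordanBlock, shiftMatrix, algebraMap_matrix_apply, apply_ite f]

variable {F : Type*} [Field F]

theorem isIndecomposable_jordanBlock (c : F) : IsIndecomposable {jordanBlock l c} := by
  have hshift := isChainBasis_basisFun (R := F) (l := l) |>.isIndecomposable.map_ringEquiv
    toLinAlgEquiv'.symm.toRingEquiv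
  refine fun e he hcomm => hshift e he ?_
  rintro _ ⟨_, rfl, rfl⟩
  simpa [jordanBlock] using (hcomm _ rfl).sub_right (Algebra.commutes c e).symm

theorem eq_of_semiconjBy_jordanBlock (hl : 0 < l) {c c' : F} {g : Matrix (Fin l) (Fin l) F}
    (hg : IsUnit g) (h : SemiconjBy g (jordanBlock l c) (jordanBlock l c')) : c = c' := by
  have := NeZero.of_pos hl
  obtain ⟨u, rfl⟩ := hg
  have hshift : SemiconjBy (u : Matrix (Fin l) (Fin l) F) (shiftMatrix F l)
      (jordanBlock l (c' - c)) := by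
    have hscalar := h.sub_right (Algebra.commutes c (u : Matrix (Fin l) (Fin l) F)).symm
    rwa [jordanBlock, jordanBlock, add_sub_cancel_left, add_sub_right_comm, ← map_sub] at hscalar
  have hnil : IsNilpotent (jordanBlock l (c' - c)) := by
    obtain ⟨k, hk⟩ := isNilpotent_shiftMatrix (R := F) (l := l)
    have hpow := (hshift.pow_right k).eq
    rw [hk, mul_zero] at hpow
    exact ⟨k, u.mul_left_eq_zero.1 hpow.symm⟩
  by_contra hne
  exact hnil.not_isUnit (isUnit_jordanBlock (sub_ne_zero.2 (Ne.symm hne)).isUnit)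

theorem exists_isUnit_semiconjBy_jordanBlock (hl : 0 < l) {A : Matrix (Fin l) (Fin l) F} {c : F}
    (hA : IsIndecomposable {A}) (hc : IsNilpotent (algebraMap F (Matrix (Fin l) (Fin l) F) c - A)) :
    ∃ g, IsUnit g ∧ SemiconjBy g A (jordanBlock l c) := by
  have := NeZero.of_pos hl
  let φ : Matrix (Fin l) (Fin l) F ≃ₐ[F] Module.End F (Fin l → F) := toLinAlgEquiv'
  have hnil : IsNilpotent (φ (A - algebraMap F _ c)) := by
    rw [← neg_sub]
    exact hc.neg.map φ
  have hind : IsIndecomposable (insert (φ (A - algebraMap F _ c))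
      (Set.range fun _ : Unit => (1 : Module.End F (Fin l → F)))) := by
    refine fun e he hcomm => hA.map_ringEquiv φ.toRingEquiv e he ?_
    rintro _ ⟨_, rfl, rfl⟩
    have := (hcomm _ (.inl rfl)).add_right (Algebra.commutes c e).symm
    simpa [φ] using this
  obtain ⟨_, n, b, hb⟩ := exists_isGradedChainBasis (a := ())
    (CompleteOrthogonalIdempotents.unique_iff.2 rfl) (fun _ => .one_right _) hnil hind
  obtain rfl : n = l := by simpa using (Module.finrank_eq_card_basis b).symm
  obtain ⟨G, hunit, hG, -⟩ := hb.isChainBasis.exists_isUnit_semiconjBy isChainBasis_basisFun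
  have hscalar : SemiconjBy (φ.symm G) (algebraMap F _ c) (algebraMap F _ c) :=
    (Algebra.commutes c _).symm
  refine ⟨φ.symm G, hunit.map φ.symm, ?_⟩
  simpa [jordanBlock, φ] using hscalar.add_right (hG.map φ.symm)

end JordanBlock

section LoopRepresentation

variable {K l : ℕ} {F : Type} [Field F] {A B : Matrix (Fin l) (Fin l) F}

/-- The representation of dimension vector `l • δ` given by the matrix `A` on the arrow from the
last vertex to `0` and by the identity on all the other arrows. -/
def loopRep (K : ℕ) (A : Matrix (Fin l) (Fin l) F) : CRep K F (fun _ => l) :=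
  fun i => (if i = Fin.last K then A else 1 : Matrix (Fin l) (Fin l) F)

theorem mapCRep_loopRep {E : Type} [Field E] (f : F →+* E) :
    mapCRep K (fun _ => l) f (loopRep K A) = loopRep K (A.map f) := by
  funext i
  change Matrix.map (if i = Fin.last K then A else 1 : Matrix (Fin l) (Fin l) F) f =
    (if i = Fin.last K then A.map f else 1 : Matrix (Fin l) (Fin l) E)
  split_ifs
  · rfl
  · exact Matrix.map_one _ (map_zero f) (map_one f)

theorem mul_loopRep_eq_iff {g : Fin (K + 1) → Matrix (Fin l) (Fin l) F} :
    (∀ i, g (i + 1) * loopRep K A i = loopRep K B i * g i) ↔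
      (∀ i, g i = g 0) ∧ SemiconjBy (g 0) A B := by
  change (∀ i, g (i + 1) * (if i = Fin.last K then A else 1) =
    (if i = Fin.last K then B else 1) * g i) ↔ _
  constructor
  · intro h
    have hg (i : Fin (K + 1)) : g i = g 0 := by
      induction i using Fin.induction with
      | zero => rfl
      | succ i ih =>
        simpa [(Fin.castSucc_lt_last i).ne, Fin.coeSucc_eq_succ, ih] using h i.castSucc
    exact ⟨hg, by simpa [SemiconjBy, hg (Fin.last K)] using h (Fin.last K)⟩
  · rintro ⟨hg, h⟩ i
    rw [hg i, hg (i + 1)]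
    split_ifs
    · exact h
    · rw [mul_one, one_mul]

theorem cIso_loopRep_iff :
    CIso K F _ (loopRep K A) (loopRep K B) ↔ ∃ g, IsUnit g ∧ SemiconjBy g A B := by
  constructor
  · rintro ⟨g, hg, h⟩
    exact ⟨g 0, hg 0, (mul_loopRep_eq_iff.1 h).2⟩
  · rintro ⟨g, hg, h⟩
    exact ⟨fun _ => g, fun _ => hg, mul_loopRep_eq_iff (g := fun _ => g) |>.2 ⟨fun _ => rfl, h⟩⟩

theorem isIndecomposable_totN_loopRep_iff :
    IsIndecomposable (insert (totN (loopRep K A)) (Set.range (totP F fun _ => l))) ↔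
      IsIndecomposable {A} := by
  constructor
  · intro h e he hcomm
    have hcommA : Commute (totMap F (fun _ : Fin (K + 1) => l) fun _ => e)
        (totN (loopRep K A)) :=
      semiconjBy_totMap_iff.2
        (mul_loopRep_eq_iff (g := fun _ => e) |>.2 ⟨fun _ => rfl, hcomm A rfl⟩)
    have hidem : IsIdempotentElem (totMap F (fun _ : Fin (K + 1) => l) fun _ => e) :=
      (he.map (Pi.constRingHom _ _)).map _
    refine (h _ hidem ?_).imp (fun h => ?_) fun h => ?_
    · rintro _ (rfl | ⟨j, rfl⟩)
      exacts [hcommA, commute_totMap_totP _ j]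
    · exact congrFun (totMap_injective (h.trans (map_zero _).symm)) 0
    · exact congrFun (totMap_injective (h.trans (map_one _).symm)) 0
  · intro h e he hcomm
    obtain ⟨g, rfl⟩ := exists_totMap_eq fun j => hcomm _ (.inr ⟨j, rfl⟩)
    have hidem : IsIdempotentElem g := totMap_injective ((map_mul _ g g).trans he)
    obtain ⟨hg, hgA⟩ := mul_loopRep_eq_iff.1 (semiconjBy_totMap_iff.1 (hcomm _ (.inl rfl)))
    refine (h (g 0) (congrFun hidem 0) fun _ hs => hs ▸ hgA).imp (fun h0 => ?_) fun h1 => ?_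
    · rw [funext fun i => (hg i).trans h0]
      exact map_zero _
    · rw [funext fun i => (hg i).trans h1]
      exact map_one _

theorem cAbsIndec_loopRep_iff : CAbsIndec K F _ (loopRep K A) ↔
    0 < l ∧ ∀ (E : Type) [Field E] (f : F →+* E), IsIndecomposable {A.map f} := by
  simp only [CAbsIndec, CIndec, mapCRep_loopRep, ← isIndecomposable_iff_not_cDecomp,
    isIndecomposable_totN_loopRep_iff, Function.ne_iff, Pi.zero_apply, exists_const,
    ← Nat.pos_iff_ne_zero]
  exact ⟨fun h => ⟨(h F (.id F)).1, fun E _ f => (h E f).2⟩, fun h E _ f => ⟨h.1, h.2 E f⟩⟩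

theorem isUnit_totN_iff_forall_isUnit {r : CRep K F fun _ => l} :
    IsUnit (totN r) ↔ ∀ i, IsUnit (r i : Matrix (Fin l) (Fin l) F) :=
  isUnit_totN_iff.trans <| forall_congr' fun _ =>
    ⟨fun h => mulVec_injective_iff_isUnit.1 h.1,
      fun h => ⟨mulVec_injective_iff_isUnit.2 h, mulVec_surjective_iff_isUnit.2 h⟩⟩

theorem isUnit_totN_loopRep_iff : IsUnit (totN (loopRep K A)) ↔ IsUnit A := by
  rw [isUnit_totN_iff_forall_isUnit]
  change (∀ i, IsUnit (if i = Fin.last K then A else 1)) ↔ _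
  refine ⟨fun h => by simpa using h (Fin.last K), fun h i => ?_⟩
  split_ifs
  exacts [h, isUnit_one]

theorem CIso.isUnit_totN {d : Fin (K + 1) → ℕ} {r r' : CRep K F d} (h : CIso K F d r r')
    (hr : IsUnit (totN r)) : IsUnit (totN r') := by
  obtain ⟨_, ⟨G, rfl⟩, -, h⟩ := cIso_iff_exists_semiconjBy.1 h
  rw [← G.mul_inv_eq_iff_eq_mul.2 h.eq]
  exact (G.isUnit.mul hr).mul G⁻¹.isUnit

-- The change of coordinates at the vertex `i` is the inverse of the composite `0 → 1 → ⋯ → i`.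
theorem exists_cIso_loopRep {r : CRep K F fun _ => l} (hr : IsUnit (totN r)) :
    ∃ A : Matrix (Fin l) (Fin l) F, IsUnit A ∧ CIso K F _ r (loopRep K A) := by
  choose s hs using isUnit_totN_iff_forall_isUnit.1 hr
  let g : Fin (K + 1) → (Matrix (Fin l) (Fin l) F)ˣ :=
    Fin.induction 1 fun i gi => gi * (s i.castSucc)⁻¹
  have hg_succ (i : Fin K) : g i.succ = g i.castSucc * (s i.castSucc)⁻¹ := rfl
  have hg_zero : g 0 = 1 := rfl
  have hiso : CIso K F _ r (loopRep K ↑(s (Fin.last K) * (g (Fin.last K))⁻¹)) := by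
    refine ⟨fun i => g i, fun i => (g i).isUnit, fun i => ?_⟩
    rw [← hs i]
    induction i using Fin.lastCases with
    | last => simp [loopRep, hg_zero]
    | cast i => simp [loopRep, hg_succ, (Fin.castSucc_lt_last i).ne]
  exact ⟨_, Units.isUnit _, hiso⟩

end LoopRepresentation

section AbsolutelyIndecomposable

variable {K : ℕ} {F : Type} [Field F] {d : Fin (K + 1) → ℕ} {r : CRep K F d}

theorem CAbsIndec.cIndec (h : CAbsIndec K F d r) : CIndec K F d r :=
  h F (.id F)

theorem CAbsIndec.isIndecomposable (h : CAbsIndec K F d r) :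
    IsIndecomposable (insert (totN r) (Set.range (totP F d))) :=
  isIndecomposable_iff_not_cDecomp.2 h.cIndec.2

theorem CAbsIndec.exists_isGradedChainBasis (h : CAbsIndec K F d r)
    (hnil : IsNilpotent (totN r)) :
    ∃ i n, ∃ b : Module.Basis (Fin n) F (Tot F d),
      IsGradedChainBasis (totP F d) 1 (totN r) i b := by
  obtain ⟨i, hi⟩ := Function.ne_iff.1 h.cIndec.1
  have : NeZero (d i) := ⟨hi⟩
  have : Nontrivial (Tot F d) := Pi.nontrivial_at i
  exact _root_.exists_isGradedChainBasis totP_complete (semiconjBy_totN_totP r) hnil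
    h.isIndecomposable

theorem cAbsIndec_loopRep_jordanBlock {l : ℕ} (hl : 0 < l) (c : F) :
    CAbsIndec K F _ (loopRep K (jordanBlock l c)) :=
  cAbsIndec_loopRep_iff.2 ⟨hl, fun _ _ f =>
    (jordanBlock_map f c).symm ▸ isIndecomposable_jordanBlock (f c)⟩

theorem CAbsIndec.exists_cIso_loopRep_jordanBlock [PerfectField F] {l : ℕ}
    {r : CRep K F fun _ => l} (h : CAbsIndec K F _ r) (hr : IsUnit (totN r)) :
    ∃ c : F, c ≠ 0 ∧ CIso K F _ r (loopRep K (jordanBlock l c)) := by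
  obtain ⟨A, hA, hrA⟩ := exists_cIso_loopRep hr
  obtain ⟨hl, hind⟩ := cAbsIndec_loopRep_iff.1 (hrA.cAbsIndec h)
  have := NeZero.of_pos hl
  obtain ⟨c, hc⟩ := exists_isNilpotent_algebraMap_sub_of_isIndecomposable_map
    (hind (AlgebraicClosure F) (algebraMap F _))
  refine ⟨c, ?_, hrA.trans (cIso_loopRep_iff.2 (exists_isUnit_semiconjBy_jordanBlock hl ?_ hc))⟩
  · rintro rfl
    rw [map_zero, zero_sub, isNilpotent_neg_iff] at hc
    exact hc.not_isUnit hA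
  · simpa using hind F (.id F)

end AbsolutelyIndecomposable

theorem exists_eq_single_sub_single {ι : Type*} [Fintype ι] [DecidableEq ι] {e : ι → ℤ}
    (hsum : ∑ j, e j = 0) (hsq : e ⬝ᵥ e = 2) :
    ∃ a b, a ≠ b ∧ e = Pi.single a 1 - Pi.single b 1 := by
  have hne : ∃ j ∈ Finset.univ, e j ≠ 0 := by
    by_contra! h
    rw [funext fun j => h j (Finset.mem_univ j)] at hsq
    simp at hsq
  obtain ⟨a, -, ha⟩ := Finset.exists_pos_of_sum_zero_of_exists_nonzero e hsum hne
  obtain ⟨b, -, hb⟩ := Finset.exists_pos_of_sum_zero_of_exists_nonzero (-e)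
    (by simpa using hsum) (by simpa using hne)
  rw [Pi.neg_apply] at hb
  have hab : a ≠ b := by
    rintro rfl
    omega
  let w : ι → ℤ := e - (Pi.single a 1 - Pi.single b 1)
  have hdist : w ⬝ᵥ w = 4 - 2 * (e a - e b) := by
    simp only [w, sub_dotProduct, dotProduct_sub, hsq, dotProduct_single_one,
      single_one_dotProduct, Pi.sub_apply, Pi.single_eq_same, Pi.single_eq_of_ne hab,
      Pi.single_eq_of_ne hab.symm]
    ring
  have hnonneg : 0 ≤ w ⬝ᵥ w := Finset.sum_nonneg fun j _ => mul_self_nonneg _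
  have hw : w = 0 := dotProduct_self_eq_zero.1 (by omega)
  exact ⟨a, b, hab, sub_eq_zero.1 hw⟩

section CyclicDifference

variable {K : ℕ}

theorem sum_apply_add_one {M : Type*} [AddCommMonoid M] (f : Fin (K + 1) → M) :
    ∑ j, f (j + 1) = ∑ j, f j :=
  Equiv.sum_comp (Equiv.addRight 1) f

theorem eq_of_apply_add_one_sub_eq {f g : Fin (K + 1) → ℤ}
    (hdiff : ∀ j, f (j + 1) - f j = g (j + 1) - g j) (hsum : ∑ j, f j = ∑ j, g j) : f = g := by
  have hconst (j : Fin (K + 1)) : f j - g j = f 0 - g 0 :=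
    eq_apply_zero_of_apply_add_one_eq (f := fun j => f j - g j)
      (fun j => by linarith [hdiff j]) j
  have hzero : f 0 - g 0 = 0 := by
    have := sub_eq_zero.2 hsum
    rw [← Finset.sum_sub_distrib, Finset.sum_congr rfl fun j _ => hconst j,
      Fin.sum_const] at this
    exact (smul_eq_zero_iff_right K.succ_ne_zero).1 this
  exact funext fun j => sub_eq_zero.1 ((hconst j).trans hzero)

theorem sum_sub_zsmul_add_one (f : Fin (K + 1) → ℤ) :
    ∑ j, (f (j + 1) - f j) • (j + 1) = -((∑ j, f j) • 1) := by
  have hshift := sum_apply_add_one fun j => f j • j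
  simp only [sub_smul, smul_add, Finset.sum_sub_distrib, Finset.sum_add_distrib] at hshift ⊢
  rw [← hshift, Finset.sum_smul]
  abel

theorem two_mul_qform (d : Fin (K + 1) → ℕ) :
    2 * qform K d =
      (fun j => (d (j + 1) - d j : ℤ)) ⬝ᵥ (fun j => (d (j + 1) - d j : ℤ)) := by
  have hexpand (j : Fin (K + 1)) : ((d (j + 1) : ℤ) - d j) * (d (j + 1) - d j) =
      (d (j + 1) : ℤ) ^ 2 + (d j : ℤ) ^ 2 - 2 * (d j * d (j + 1)) := by ring
  rw [dotProduct, Finset.sum_congr rfl fun j _ => hexpand j, Finset.sum_sub_distrib,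
    Finset.sum_add_distrib, sum_apply_add_one fun j => (d j : ℤ) ^ 2, ← Finset.mul_sum, qform]
  ring

end CyclicDifference

section StringDimension

variable {K n : ℕ} {i : Fin (K + 1)}

theorem stringDim_apply_add_one_sub (n : ℕ) (i j : Fin (K + 1)) :
    (stringDim n i (j + 1) - stringDim n i j : ℤ) =
      (Pi.single i 1 - Pi.single (i + n • 1) 1 : Fin (K + 1) → ℤ) (j + 1) := by
  have hcount : stringDim n i (j + 1) + (if i + n • 1 = j + 1 then 1 else 0) =
      stringDim n i j + (if i = j + 1 then 1 else 0) := by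
    rw [stringDim, ← Nat.count_succ (fun t => i + t • (1 : Fin (K + 1)) = j + 1), Nat.count_succ']
    simp only [succ_nsmul, ← add_assoc, add_left_inj, zero_nsmul, add_zero, stringDim]
  simp only [Pi.sub_apply, Pi.single_apply, eq_comm (a := j + 1)]
  split_ifs at hcount ⊢ <;> omega

theorem const_eq_stringDim (l : ℕ) (i : Fin (K + 1)) :
    (fun _ => l) = stringDim ((K + 1) * l) i := by
  have hcast : (fun _ => (l : ℤ)) = fun j => (stringDim ((K + 1) * l) i j : ℤ) := by
    refine eq_of_apply_add_one_sub_eq (fun j => ?_) ?_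
    · rw [stringDim_apply_add_one_sub, mul_comm, mul_nsmul', succ_nsmul_one_eq_zero, nsmul_zero,
        add_zero, sub_self, sub_self, Pi.zero_apply]
    · rw [← Nat.cast_sum, ← Nat.cast_sum, sum_stringDim]
      simp
  exact funext fun j => Nat.cast_injective (congrFun hcast j)

theorem stringDim_right_injective (hi : i + n • 1 ≠ i) {i' : Fin (K + 1)}
    (h : stringDim n i = stringDim n i') : i = i' := by
  by_contra hne
  have hdiff := stringDim_apply_add_one_sub n i (i - 1)
  rw [h, stringDim_apply_add_one_sub] at hdiff
  simp only [sub_add_cancel, Pi.sub_apply, Pi.single_apply, if_neg hne, if_neg hi.symm] at hdiff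
  split_ifs at hdiff <;> omega

theorem exists_eq_stringDim_of_qform_eq_one {d : Fin (K + 1) → ℕ} (hd : qform K d = 1) :
    ∃ n i, i + n • 1 ≠ i ∧ d = stringDim n i := by
  obtain ⟨a, b, hab, he⟩ := exists_eq_single_sub_single (e := fun j => (d (j + 1) - d j : ℤ))
    (by rw [Finset.sum_sub_distrib, sum_apply_add_one fun j => (d j : ℤ), sub_self])
    (by rw [← two_mul_qform, hd, mul_one])
  have hend : a + 1 + (∑ j, d j) • 1 = b + 1 := by
    have hparts := sum_sub_zsmul_add_one fun j => (d j : ℤ)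
    simp only [congrFun he, Pi.sub_apply, sub_smul, Pi.single_apply, ite_smul, one_smul, zero_smul,
      Finset.sum_sub_distrib, Finset.sum_ite_eq', Finset.mem_univ, if_true] at hparts
    rw [← Nat.cast_sum, natCast_zsmul, sub_eq_iff_eq_add] at hparts
    rw [hparts, neg_add_cancel_comm]
  refine ⟨∑ j, d j, a + 1, fun h => hab (add_right_cancel (h.symm.trans hend)), ?_⟩
  have hcast : (fun j => (d j : ℤ)) = fun j => (stringDim (∑ j, d j) (a + 1) j : ℤ) := by
    refine eq_of_apply_add_one_sub_eq (fun j => ?_) ?_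
    · rw [stringDim_apply_add_one_sub, hend, congrFun he j]
      simp [Pi.single_apply]
    · rw [← Nat.cast_sum, ← Nat.cast_sum, sum_stringDim]
  exact funext fun j => Nat.cast_injective (congrFun hcast j)

end StringDimension

section Count

variable {K n l : ℕ} {F : Type} [Field F] {d : Fin (K + 1) → ℕ} {i : Fin (K + 1)}

theorem kacCount_eq_card {α : Type*} (f : α → CRep K F d) (hf : ∀ a, CAbsIndec K F d (f a))
    (hinj : ∀ a b, CIso K F d (f a) (f b) → a = b)
    (hsurj : ∀ r, CAbsIndec K F d r → ∃ a, CIso K F d r (f a)) : kacCount K F d = Nat.card α := by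
  have hequiv : Equivalence fun r r' : {r : CRep K F d // CAbsIndec K F d r} =>
      CIso K F d r.1 r'.1 :=
    CIso.equivalence.comap Subtype.val
  refine (Nat.card_eq_of_bijective (fun a => Quot.mk _ ⟨f a, hf a⟩) ⟨fun a b h => ?_, ?_⟩).symm
  · exact hinj a b ((hequiv.quot_mk_eq_iff _ _).1 h)
  · rintro ⟨r, hr⟩
    obtain ⟨a, ha⟩ := hsurj r hr
    exact ⟨a, Quot.sound ha.symm⟩

theorem exists_cAbsIndec_isGradedChainBasis (F : Type) [Field F] (hd : d = stringDim n i)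
    (hn : 0 < n) : ∃ r : CRep K F d, CAbsIndec K F d r ∧
      ∃ b : Module.Basis (Fin n) F (Tot F d), IsGradedChainBasis (totP F d) 1 (totN r) i b := by
  subst hd
  exact ⟨stringRep F n i, cAbsIndec_stringRep hn, stringBasis F n i, isGradedChainBasis_stringBasis⟩

theorem CAbsIndec.exists_isGradedChainBasis_or_isUnit {r : CRep K F d} (hd : d = stringDim n i)
    (h : CAbsIndec K F d r) :
    (∃ j, ∃ b : Module.Basis (Fin n) F (Tot F d), IsGradedChainBasis (totP F d) 1 (totN r) j b) ∨
      IsUnit (totN r) := by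
  refine (isNilpotent_or_isUnit_totN h.isIndecomposable).imp_left fun hnil => ?_
  obtain ⟨j, m, b, hb⟩ := h.exists_isGradedChainBasis hnil
  have hm : m = n := by
    rw [← sum_stringDim m j, ← eq_stringDim_of_isGradedChainBasis hb, hd, sum_stringDim]
  exact ⟨j, hm ▸ ⟨b, hb⟩⟩

theorem kacCount_stringDim (hi : i + n • 1 ≠ i) : kacCount K F (stringDim n i) = 1 := by
  have hn : 0 < n := Nat.pos_of_ne_zero (by rintro rfl; simp at hi)
  rw [kacCount_eq_card (fun _ : Unit => stringRep F n i) (fun _ => cAbsIndec_stringRep hn)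
    (fun _ _ _ => rfl) fun r hr => ⟨(), ?_⟩, Nat.card_unique]
  obtain ⟨j, b, hb⟩ | hunit := hr.exists_isGradedChainBasis_or_isUnit rfl
  · obtain rfl := stringDim_right_injective hi (eq_stringDim_of_isGradedChainBasis hb)
    exact cIso_of_isGradedChainBasis hb isGradedChainBasis_stringBasis
  · have hdiff := stringDim_apply_add_one_sub n i (i - 1)
    rw [dim_eq_of_isUnit_totN hunit, dim_eq_of_isUnit_totN hunit (i - 1), sub_self] at hdiff
    simp [Pi.single_eq_of_ne hi.symm] at hdiff

theorem kacCount_eq_one_of_qform_eq_one (hd : qform K d = 1) : kacCount K F d = 1 := by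
  obtain ⟨n, i, hi, rfl⟩ := exists_eq_stringDim_of_qform_eq_one hd
  exact kacCount_stringDim hi

theorem not_isUnit_totN_of_isGradedChainBasis (hn : 0 < n) {r : CRep K F d}
    {b : Module.Basis (Fin n) F (Tot F d)} (hb : IsGradedChainBasis (totP F d) 1 (totN r) i b) :
    ¬IsUnit (totN r) := by
  have := NeZero.of_pos hn
  have : Nontrivial (Tot F d) := b.repr.toEquiv.nontrivial
  exact hb.isChainBasis.isNilpotent.not_isUnit

theorem kacCount_const [Finite F] (hl : 0 < l) : kacCount K F (fun _ => l) = Nat.card F + K := by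
  have hn : 0 < (K + 1) * l := by positivity
  choose R hR b hb using fun i : Fin (K + 1) =>
    exists_cAbsIndec_isGradedChainBasis F (const_eq_stringDim l i) hn
  have hjordan (c : Fˣ) : IsUnit (totN (loopRep K (jordanBlock l (c : F)))) :=
    isUnit_totN_loopRep_iff.2 (isUnit_jordanBlock c.isUnit)
  have hstring (i : Fin (K + 1)) : ¬IsUnit (totN (R i)) :=
    not_isUnit_totN_of_isGradedChainBasis hn (hb i)
  rw [kacCount_eq_card (α := Fˣ ⊕ Fin (K + 1))
    (Sum.elim (fun c : Fˣ => loopRep K (jordanBlock l (c : F))) R)]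
  · rw [Nat.card_sum, Nat.card_units, Nat.card_fin]
    have : 0 < Nat.card F := Nat.card_pos
    omega
  · rintro (c | i)
    exacts [cAbsIndec_loopRep_jordanBlock hl (c : F), hR i]
  · rintro (c | i) (c' | i') h
    · obtain ⟨g, hg, hgc⟩ := cIso_loopRep_iff.1 h
      exact congrArg Sum.inl (Units.ext (eq_of_semiconjBy_jordanBlock hl hg hgc))
    · exact absurd (h.isUnit_totN (hjordan c)) (hstring i')
    · exact absurd (h.symm.isUnit_totN (hjordan c')) (hstring i)
    · obtain ⟨G, hunit, hGP, hG⟩ := cIso_iff_exists_semiconjBy.1 h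
      exact congrArg Sum.inr ((hb i).start_eq_of_semiconjBy
        totP_complete.toOrthogonalIdempotents hn (hb i') hunit hGP hG)
  · intro r hr
    obtain ⟨i, b', hb'⟩ | hunit :=
      hr.exists_isGradedChainBasis_or_isUnit (const_eq_stringDim l 0)
    · exact ⟨.inr i, cIso_of_isGradedChainBasis hb' (hb i)⟩
    · obtain ⟨c, hc, hiso⟩ := hr.exists_cIso_loopRep_jordanBlock hunit
      exact ⟨.inl (Units.mk0 c hc), hiso⟩

end Count

theorem card_const_sum_eq {K N : ℕ} (hN : 0 < N) :
    Nat.card {d : Fin (K + 1) → ℕ // (∑ i, d i) = N ∧ ∃ l : ℕ, 1 ≤ l ∧ d = fun _ => l} =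
      if (K + 1) ∣ N then 1 else 0 := by
  split_ifs with h
  · obtain ⟨l, rfl⟩ := h
    refine Nat.card_eq_one_iff_exists.2
      ⟨⟨fun _ => l, by simp, l, Nat.pos_of_mul_pos_left hN, rfl⟩, ?_⟩
    rintro ⟨_, hsum, l', -, rfl⟩
    obtain rfl : l' = l := by simpa using hsum
    rfl
  · refine Nat.card_eq_zero.2 (.inl ⟨?_⟩)
    rintro ⟨_, hsum, l, -, rfl⟩
    exact h ⟨l, by simpa using hsum.symm⟩

/-- The Kac polynomial of the cyclic quiver `Q^K` with `K+1`
vertices satisfies `a_{Q^K,d}(q) = q + K` for `d ∈ ℤ_{>0}·δ` (positive imaginary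
roots) and `a_{Q^K,d}(q) = 1` for `d` a positive real root of `ŝl_{K+1}`; in
particular, the number of dimension vectors `d` with `|d| = N` supporting absolutely
indecomposable representations, weighted by `a_{Q^K,d}(1)`, is `1 + K` for each
multiple of `δ` plus `1` for each real root. -/
theorem stmt_18 (K : ℕ) (hK : 1 ≤ K) (F : Type) [Field F] [Fintype F]
    (d : Fin (K + 1) → ℕ) :
    ((∃ l : ℕ, 1 ≤ l ∧ d = fun _ => l) →
      kacCount K F d = Fintype.card F + K) ∧
    ((d ≠ 0 ∧ qform K d = 1) → kacCount K F d = 1) ∧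
    (∀ N : ℕ, 1 ≤ N →
      Nat.card { d' : Fin (K + 1) → ℕ //
          (∑ i, d' i) = N ∧ ∃ l : ℕ, 1 ≤ l ∧ d' = fun _ => l } * (1 + K)
        + Nat.card { d' : Fin (K + 1) → ℕ //
            (∑ i, d' i) = N ∧ d' ≠ 0 ∧ qform K d' = 1 }
      = (if (K + 1) ∣ N then 1 + K else 0)
        + Nat.card { d' : Fin (K + 1) → ℕ //
            (∑ i, d' i) = N ∧ d' ≠ 0 ∧ qform K d' = 1 }) := by
  refine ⟨?_, fun ⟨_, hd⟩ => kacCount_eq_one_of_qform_eq_one hd, fun N hN => ?_⟩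
  · rintro ⟨l, hl, rfl⟩
    rw [kacCount_const hl, Nat.card_eq_fintype_card]
  · rw [card_const_sum_eq hN, ite_mul, one_mul, zero_mul]
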